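/- Deviation bound for the propensity matrix divergence (Lemma 1): suppose L > 0 and ℓ is L-Lipschitz in each argument, i.e., |ℓ(a, b) − ℓ(a', b)| ≤ L|a − a'| and |ℓ(a, b) − ℓ(a, b')| ≤ L|b − b'| for all reals. Let H be a nonempty, uniformly bounded class of real m×n matrices, let P and P' be probability distributions on D, and let S and S' be independent i.i.d. samples of size M ≥ 1 from P and P' respectively, with empirical distributions P̂_S and P̂_{S'}. Then for every δ ∈ (0, 1), with probability at least 1 − δ, for every R̂ ∈ H: | ψ_{R̂,H}(P, P') − ψ_{R̂,H}(P̂_S, P̂_{S'}) | ≤ 4L ( R_{P,M}(H) + R_{P',M}(H) ) + Δ √( 2 log(4/δ) / M ). -/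

import Mathlib

open scoped Classical

/-- Rademacher complexity of a class `F` of functions `D → ℝ` for i.i.d. samples of
size `M` from the distribution `P` on `D = Fin m × Fin n`:
`R_{P,M}(F) = E_S E_σ [ sup_{f∈F} (1/M) Σ_k σ_k · f (S k) ]`, where the expectation
over samples is the explicit finite sum weighted by the product probabilities and the
Rademacher signs `σ : Fin M → Bool` (`true ↦ +1`, `false ↦ -1`) are uniform. -/
noncomputable def rademacher {m n : ℕ} (M : ℕ) (P : Fin m × Fin n → ℝ)
    (F : Set (Fin m × Fin n → ℝ)) : ℝ :=
  ∑ S : Fin M → Fin m × Fin n, (∏ k : Fin M, P (S k)) *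
    ∑ σ : Fin M → Bool, ((1 : ℝ) / 2) ^ M *
      sSup ((fun f => (1 / (M : ℝ)) *
        ∑ k : Fin M, (if σ k then (1 : ℝ) else -1) * f (S k)) '' F)

/-- Rademacher complexity of a class `H` of real `m × n` matrices, i.e. of the
associated function class `{ (u,i) ↦ R̂ u i : R̂ ∈ H }`. -/
noncomputable def matRademacher {m n : ℕ} (M : ℕ) (P : Fin m × Fin n → ℝ)
    (H : Set (Fin m → Fin n → ℝ)) : ℝ :=
  rademacher M P ((fun Rh : Fin m → Fin n → ℝ => fun p : Fin m × Fin n => Rh p.1 p.2) '' H)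

/-- Probability of an event `E` over an i.i.d. sample `S : Fin M → D` drawn from the
distribution `P` on `D` (the `M`-fold product distribution, as an explicit finite sum). -/
noncomputable def prSample {m n : ℕ} (M : ℕ) (P : Fin m × Fin n → ℝ)
    (E : (Fin M → Fin m × Fin n) → Prop) : ℝ :=
  ∑ S : Fin M → Fin m × Fin n, if E S then ∏ k : Fin M, P (S k) else 0

/-- Probability of an event `E` over two independent i.i.d. samples of size `M`,
drawn from the distributions `P` and `P'` on `D` respectively. -/
noncomputable def prSample2 {m n : ℕ} (M : ℕ) (P P' : Fin m × Fin n → ℝ)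
    (E : (Fin M → Fin m × Fin n) → (Fin M → Fin m × Fin n) → Prop) : ℝ :=
  ∑ S : Fin M → Fin m × Fin n, ∑ S' : Fin M → Fin m × Fin n,
    if E S S' then (∏ k : Fin M, P (S k)) * (∏ k : Fin M, P' (S' k)) else 0

/-- Empirical distribution of a sample `S : Fin M → D`:
`P̂_S (p) = (1/M) · #{k : S k = p}`. -/
noncomputable def empDist {m n M : ℕ} (S : Fin M → Fin m × Fin n) :
    Fin m × Fin n → ℝ :=
  fun p => (1 / (M : ℝ)) * ((Finset.univ.filter (fun k : Fin M => S k = p)).card : ℝ)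

/-- Weighted loss `L^ℓ(A, B | P) = Σ_{(u,i)∈D} P (u,i) · ℓ(A u i, B u i)`. -/
noncomputable def wLoss {m n : ℕ} (ℓ : ℝ → ℝ → ℝ) (P : Fin m × Fin n → ℝ)
    (A B : Fin m → Fin n → ℝ) : ℝ :=
  ∑ p : Fin m × Fin n, P p * ℓ (A p.1 p.2) (B p.1 p.2)

/-- Propensity matrix divergence (PMD):
`ψ_{R̂,H}(P, P') = sup_{R̂'∈H} { L^ℓ(R̂, R̂' | P) − L^ℓ(R̂, R̂' | P') }`. -/
noncomputable def PMD {m n : ℕ} (ℓ : ℝ → ℝ → ℝ) (H : Set (Fin m → Fin n → ℝ))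
    (Rhat : Fin m → Fin n → ℝ) (P P' : Fin m × Fin n → ℝ) : ℝ :=
  sSup ((fun R' => wLoss ℓ P Rhat R' - wLoss ℓ P' Rhat R') '' H)

/-!
Let `V` be the supremum of the coordinates of a vector indexed by pairs of hypotheses. It is
sublinear, and the deviations of `ψ` in either direction are at most `V D / M` and `V (-D) / M`,
where `D` is the deviation of a difference of two i.i.d. sums of loss vectors from its mean.

The expectations of `V D` and `V (-D)` are compared with Rademacher complexities through a sum of
`2 * M` randomly signed loss vectors. By Jensen's inequality, a sum with `M` positive and `M`
negative signs has expectation at least that of `V` at the deviation of one sample. On the other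
side, the Lipschitz condition replaces every signed loss by a signed entry of the first or of the
second hypothesis, each with probability `1 / 2`, so that `M` of either kind are expected. Both
counts are binomial, and the error made by pretending that they equal `M` is governed by their mean
absolute deviation, of order `√M`, which the Wallis product bounds with an explicit constant.

McDiarmid's inequality bounds the two tails. In units of the fluctuation scale of `D`, the excesses
`p` and `q` of the expectations of `V D` and `V (-D)` over the Rademacher term satisfy
`p + q / 2 ≤ 1.13` and `q + p / 2 ≤ 1.13`, as they cannot both be large. With
`τ = √(2 * log (4 / δ))` this gives
`exp (-(τ - p) ^ 2) + exp (-(τ - q) ^ 2) ≤ 4 * exp (-τ ^ 2 / 2) = δ`.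
-/

namespace PMDDeviation

open Finset

section IidExpectation

variable {β : Type*} [Fintype β] {Q : β → ℝ}

/-- The expectation of `F` over `n` independent draws from the weights `Q`, as a finite sum. -/
noncomputable def iidExp (n : ℕ) (Q : β → ℝ) (F : (Fin n → β) → ℝ) : ℝ :=
  ∑ z, (∏ k, Q (z k)) * F z

lemma iidExp_mono (hQ : 0 ≤ Q) {n : ℕ} {F G : (Fin n → β) → ℝ} (h : ∀ z, F z ≤ G z) :
    iidExp n Q F ≤ iidExp n Q G :=
  sum_le_sum fun z _ => mul_le_mul_of_nonneg_left (h z) (prod_nonneg fun k _ => hQ (z k))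

lemma iidExp_add {n : ℕ} (F G : (Fin n → β) → ℝ) :
    iidExp n Q (fun z => F z + G z) = iidExp n Q F + iidExp n Q G := by
  simp only [iidExp, mul_add, sum_add_distrib]

lemma iidExp_const_mul {n : ℕ} (t : ℝ) (F : (Fin n → β) → ℝ) :
    iidExp n Q (fun z => t * F z) = t * iidExp n Q F := by
  simp only [iidExp, mul_sum, mul_left_comm]

lemma iidExp_sum {ι : Type*} {n : ℕ} (s : Finset ι) (F : ι → (Fin n → β) → ℝ) :
    iidExp n Q (fun z => ∑ i ∈ s, F i z) = ∑ i ∈ s, iidExp n Q (F i) := by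
  simp only [iidExp, mul_sum]
  exact sum_comm

lemma iidExp_const (hQ : ∑ a, Q a = 1) {n : ℕ} (t : ℝ) : iidExp n Q (fun _ => t) = t := by
  rw [iidExp, ← sum_mul, ← Fintype.piFinset_univ, ← prod_univ_sum]
  simp only [hQ, prod_const_one, one_mul]

lemma iidExp_zero (F : (Fin 0 → β) → ℝ) : iidExp 0 Q F = F default := by
  simp [iidExp]

lemma iidExp_succ {n : ℕ} (F : (Fin (n + 1) → β) → ℝ) :
    iidExp (n + 1) Q F = ∑ a, Q a * iidExp n Q (fun z => F (Fin.cons a z)) := by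
  rw [iidExp, ← (Fin.consEquiv fun _ => β).sum_comp, Fintype.sum_prod_type]
  refine sum_congr rfl fun a _ => ?_
  rw [iidExp, mul_sum]
  refine sum_congr rfl fun z _ => ?_
  simp only [Fin.consEquiv, Equiv.coe_fn_mk, Fin.prod_univ_succ, Fin.cons_zero, Fin.cons_succ,
    mul_assoc]

lemma iidExp_append {p q : ℕ} (F : (Fin (p + q) → β) → ℝ) :
    iidExp (p + q) Q F = iidExp p Q fun z => iidExp q Q fun w => F (Fin.append z w) := by
  simp only [iidExp, mul_sum]
  rw [← (Fin.appendEquiv p q).sum_comp, Fintype.sum_prod_type]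
  refine sum_congr rfl fun z _ => sum_congr rfl fun w _ => ?_
  simp only [Fin.appendEquiv, Equiv.coe_fn_mk, Fin.prod_univ_add, Fin.append_left,
    Fin.append_right, mul_assoc]

lemma iidExp_comp_perm {n : ℕ} (e : Equiv.Perm (Fin n)) (F : (Fin n → β) → ℝ) :
    iidExp n Q (fun z => F (z ∘ e)) = iidExp n Q F := by
  refine Fintype.sum_equiv (e.symm.arrowCongr (Equiv.refl β)) _ _ fun z => ?_
  congr 1
  exact (Equiv.prod_comp e fun k => Q (z k)).symm

lemma iidExp_comp_castAdd (hQ : ∑ a, Q a = 1) {p q : ℕ} (F : (Fin p → β) → ℝ) :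
    iidExp (p + q) Q (fun z => F (z ∘ Fin.castAdd q)) = iidExp p Q F := by
  rw [iidExp_append]
  simp only [Function.comp_def, Fin.append_left, iidExp_const hQ]

end IidExpectation

section RandomWalk

variable {E : Type*} [AddCommMonoid E] {β : Type*} [Fintype β] {Q : β → ℝ}

/-- The transition operator of the random walk on `E` with increments `f a`, `a ∼ Q`. -/
noncomputable def stepOp (Q : β → ℝ) (f : β → E) : Module.End ℝ (E → ℝ) where
  toFun F b := ∑ a, Q a * F (b + f a)
  map_add' F G := by ext b; simp [mul_add, sum_add_distrib]
  map_smul' t F := by ext b; simp [mul_sum, mul_left_comm]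

lemma stepOp_apply (f : β → E) (F : E → ℝ) (b : E) :
    stepOp Q f F b = ∑ a, Q a * F (b + f a) := rfl

lemma stepOp_commute {γ : Type*} [Fintype γ] (Q : β → ℝ) (Q' : γ → ℝ) (f : β → E) (f' : γ → E) :
    Commute (stepOp Q f) (stepOp Q' f') := by
  ext F b
  simp only [Module.End.mul_apply, stepOp_apply, mul_sum]
  rw [sum_comm]
  refine sum_congr rfl fun c _ => sum_congr rfl fun a _ => ?_
  rw [add_right_comm, mul_left_comm]

lemma monotone_stepOp (hQ : 0 ≤ Q) (f : β → E) : Monotone (stepOp Q f) :=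
  fun _ _ h _ => sum_le_sum fun a _ => mul_le_mul_of_nonneg_left (h _) (hQ a)

lemma monotone_stepOp_pow (hQ : 0 ≤ Q) (f : β → E) (n : ℕ) : Monotone ⇑(stepOp Q f ^ n) := by
  rw [Module.End.coe_pow]
  exact (monotone_stepOp hQ f).iterate n

lemma stepOp_pow_apply (f : β → E) (F : E → ℝ) (n : ℕ) (b : E) :
    (stepOp Q f ^ n) F b = iidExp n Q fun z => F (b + ∑ k, f (z k)) := by
  induction n generalizing b with
  | zero => simp [iidExp_zero]
  | succ n ih =>
    rw [pow_succ', Module.End.mul_apply, stepOp_apply, iidExp_succ]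
    simp only [ih, Fin.sum_univ_succ, Fin.cons_zero, Fin.cons_succ, add_assoc]

end RandomWalk

section Jensen

variable {E : Type*} [AddCommGroup E] [Module ℝ E] {β : Type*} [Fintype β] {Q : β → ℝ}
  {F : E → ℝ}

/-- The mean of the vectors `f a` under the weights `Q`. -/
noncomputable def mean (Q : β → ℝ) (f : β → E) : E := ∑ a, Q a • f a

lemma mean_neg (f : β → E) : mean Q (-f) = -mean Q f := by
  simp only [mean, Pi.neg_apply, smul_neg, sum_neg_distrib]

lemma convexOn_stepOp (hF : ConvexOn ℝ Set.univ F) (hQ : 0 ≤ Q) (f : β → E) :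
    ConvexOn ℝ Set.univ (stepOp Q f F) := by
  refine ⟨convex_univ, fun x _ y _ s t hs ht hst => ?_⟩
  simp only [stepOp_apply, smul_eq_mul, mul_sum, ← sum_add_distrib]
  refine sum_le_sum fun a _ => ?_
  have hsplit : s • x + t • y + f a = s • (x + f a) + t • (y + f a) := by
    rw [smul_add, smul_add, add_add_add_comm, ← add_smul, hst, one_smul]
  calc Q a * F (s • x + t • y + f a) ≤ Q a * (s * F (x + f a) + t * F (y + f a)) := by
        rw [hsplit]
        exact mul_le_mul_of_nonneg_left
          (hF.2 (Set.mem_univ _) (Set.mem_univ _) hs ht hst) (hQ a)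
    _ = s * (Q a * F (x + f a)) + t * (Q a * F (y + f a)) := by ring

lemma convexOn_stepOp_pow (hF : ConvexOn ℝ Set.univ F) (hQ : 0 ≤ Q) (f : β → E) (n : ℕ) :
    ConvexOn ℝ Set.univ ((stepOp Q f ^ n) F) := by
  induction n with
  | zero => simpa using hF
  | succ n ih => rw [pow_succ', Module.End.mul_apply]; exact convexOn_stepOp ih hQ f

lemma apply_add_mean_le_stepOp (hF : ConvexOn ℝ Set.univ F) (hQ : Q ∈ stdSimplex ℝ β)
    (f : β → E) (b : E) : F (b + mean Q f) ≤ stepOp Q f F b := by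
  have hmean : b + mean Q f = ∑ a, Q a • (b + f a) := by
    simp only [mean, smul_add, sum_add_distrib, ← sum_smul, hQ.2, one_smul]
  rw [hmean]
  exact hF.map_sum_le (fun a _ => hQ.1 a) hQ.2 fun a _ => Set.mem_univ _

lemma apply_add_smul_mean_le_stepOp_pow (hF : ConvexOn ℝ Set.univ F) (hQ : Q ∈ stdSimplex ℝ β)
    (f : β → E) (n : ℕ) (b : E) : F (b + (n : ℝ) • mean Q f) ≤ (stepOp Q f ^ n) F b := by
  induction n generalizing F with
  | zero => simp
  | succ n ih =>
    calc F (b + ((n + 1 : ℕ) : ℝ) • mean Q f) = F (b + (n : ℝ) • mean Q f + mean Q f) := by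
          rw [Nat.cast_succ, add_smul, one_smul, add_assoc]
      _ ≤ stepOp Q f F (b + (n : ℝ) • mean Q f) := apply_add_mean_le_stepOp hF hQ f _
      _ ≤ (stepOp Q f ^ n) (stepOp Q f F) b := ih (convexOn_stepOp hF hQ.1 f)
      _ = (stepOp Q f ^ (n + 1)) F b := by rw [pow_succ, Module.End.mul_apply]

-- The expectation on the right is unchanged when the weights `c` are permuted cyclically; averaging
-- over the cyclic shifts inside the convex function `F` replaces every weight by their mean.
lemma iidExp_mean_weight_le (hF : ConvexOn ℝ Set.univ F) (hQ : 0 ≤ Q) (f : β → E) {n : ℕ}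
    [NeZero n] (c : Fin n → ℝ) (b : E) :
    iidExp n Q (fun z => F (b + ((∑ k, c k) / n) • ∑ k, f (z k))) ≤
      iidExp n Q fun z => F (b + ∑ k, c k • f (z k)) := by
  have hn : (n : ℝ) ≠ 0 := Nat.cast_ne_zero.2 (NeZero.ne n)
  have hshift (z : Fin n → β) : ∑ r, (n : ℝ)⁻¹ • (b + ∑ k, c k • f (z (k + r))) =
      b + ((∑ k, c k) / n) • ∑ k, f (z k) := by
    have hrow (k : Fin n) : ∑ r, c k • f (z (k + r)) = c k • ∑ r, f (z r) := by
      rw [← smul_sum]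
      exact congrArg _ (Equiv.sum_comp (Equiv.addLeft k) fun r => f (z r))
    rw [← smul_sum, sum_add_distrib, sum_comm]
    simp only [hrow, ← sum_smul, sum_const, card_univ, Fintype.card_fin, smul_add, smul_smul]
    rw [← Nat.cast_smul_eq_nsmul ℝ, inv_smul_smul₀ hn, div_eq_inv_mul]
  calc iidExp n Q (fun z => F (b + ((∑ k, c k) / n) • ∑ k, f (z k)))
      ≤ iidExp n Q fun z => ∑ r, (n : ℝ)⁻¹ * F (b + ∑ k, c k • f (z (k + r))) := by
        refine iidExp_mono hQ fun z => ?_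
        rw [← hshift]
        refine hF.map_sum_le (fun _ _ => by positivity) ?_ fun _ _ => Set.mem_univ _
        simp [hn]
    _ = ∑ r : Fin n, (n : ℝ)⁻¹ * iidExp n Q fun z => F (b + ∑ k, c k • f (z (k + r))) := by
        simp only [iidExp_sum, iidExp_const_mul]
    _ = ∑ _ : Fin n, (n : ℝ)⁻¹ * iidExp n Q fun z => F (b + ∑ k, c k • f (z k)) :=
        sum_congr rfl fun _ _ => congrArg _ <|
          iidExp_comp_perm (Equiv.addRight _) fun z => F (b + ∑ k, c k • f (z k))
    _ = iidExp n Q fun z => F (b + ∑ k, c k • f (z k)) := by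
        simp [hn]

lemma iidExp_mean_le_stepOp_pow (hF : ConvexOn ℝ Set.univ F) (hQ : Q ∈ stdSimplex ℝ β)
    (f : β → E) (p q : ℕ) [NeZero (p + q)] (b : E) :
    iidExp (p + q) Q (fun z => F (b + ((p : ℝ) / (p + q : ℕ)) • ∑ k, f (z k))) ≤
      (stepOp Q f ^ p) F b := by
  have hexch := iidExp_mean_weight_le hF hQ.1 f
    (Fin.append (fun _ : Fin p => 1) fun _ : Fin q => 0) b
  simp only [Fin.sum_univ_add, Fin.append_left, Fin.append_right, one_smul, zero_smul,
    sum_const_zero, add_zero, sum_const, card_univ, Fintype.card_fin, nsmul_eq_mul,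
    mul_one] at hexch
  rw [stepOp_pow_apply, ← iidExp_comp_castAdd hQ.2 fun z => F (b + ∑ k, f (z k))]
  simpa only [Fin.sum_univ_add, Function.comp_apply] using hexch

end Jensen

section SignedExpectation

variable {E : Type*} [AddCommGroup E] {β : Type*} [Fintype β]

/-- The expectation of `V` at a sum of `p` independent copies of `g` and `n` of `-g`. -/
noncomputable def signedExp (V : E → ℝ) (Q : β → ℝ) (g : β → E) (p n : ℕ) : ℝ :=
  (stepOp Q g ^ p * stepOp Q (-g) ^ n) V 0

lemma signedExp_neg (V : E → ℝ) (Q : β → ℝ) (g : β → E) (p n : ℕ) :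
    signedExp V Q (-g) p n = signedExp V Q g n p := by
  rw [signedExp, signedExp, neg_neg, ((stepOp_commute Q Q (-g) g).pow_pow p n).eq]

end SignedExpectation

section Sublinear

variable {E : Type*} [AddCommGroup E] [Module ℝ E] {V : E → ℝ}

/-- Sublinear functionals: subadditive and positively homogeneous. The expectations studied here
are those of such functionals of sums of independent vectors; the relevant one is a supremum of
coordinates. -/
structure IsSublinear (V : E → ℝ) : Prop where
  add_le : ∀ a b, V (a + b) ≤ V a + V b
  smul : ∀ ⦃t : ℝ⦄, 0 ≤ t → ∀ a, V (t • a) = t * V a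

namespace IsSublinear

lemma map_zero (hV : IsSublinear V) : V 0 = 0 := by simpa using hV.smul le_rfl 0

lemma convexOn (hV : IsSublinear V) : ConvexOn ℝ Set.univ V :=
  ⟨convex_univ, fun x _ y _ s t hs ht _ =>
    (hV.add_le _ _).trans_eq (by rw [hV.smul hs, hV.smul ht, smul_eq_mul, smul_eq_mul])⟩

lemma map_sum_le (hV : IsSublinear V) {ι : Type*} (s : Finset ι) (f : ι → E) :
    V (∑ i ∈ s, f i) ≤ ∑ i ∈ s, V (f i) :=
  le_sum_of_subadditive V hV.map_zero.le hV.add_le s f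

lemma map_sum_fin_le (hV : IsSublinear V) {M : ℕ} {f : Fin M → E} {C : ℝ}
    (hC : ∀ k, V (f k) ≤ C) : V (∑ k, f k) ≤ M * C :=
  (hV.map_sum_le univ f).trans ((sum_le_sum fun k _ => hC k).trans_eq (by simp))

end IsSublinear

variable {β : Type*} [Fintype β] {Q : β → ℝ} {g : β → E}

/-- The deviation `∑ k, (𝔼 g - g (z k))` of the sample `z` from the mean of `g` under `Q`, without
the normalising factor `1 / M`. -/
noncomputable def dev {M : ℕ} (Q : β → ℝ) (g : β → E) (z : Fin M → β) : E :=
  (M : ℝ) • mean Q g - ∑ k, g (z k)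

/-- The expected value of the sublinear functional `V` at the deviation of a sample of size `M`. -/
noncomputable def expDev (V : E → ℝ) (Q : β → ℝ) (g : β → E) (M : ℕ) : ℝ :=
  iidExp M Q fun z => V (dev Q g z)

lemma mul_expDev (hV : IsSublinear V) (Q : β → ℝ) (g : β → E) (M : ℕ) {t : ℝ} (ht : 0 ≤ t) :
    t * expDev V Q g M =
      iidExp M Q fun z => V ((t * M) • mean Q g + t • ∑ k, (-g) (z k)) := by
  simp only [expDev, dev, ← iidExp_const_mul, ← hV.smul ht, sub_eq_add_neg, smul_add, smul_smul,
    Pi.neg_apply, sum_neg_distrib]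

lemma stepOp_pow_smul_mean_le_signedExp (hV : IsSublinear V) (hQ : Q ∈ stdSimplex ℝ β)
    (p n : ℕ) : (stepOp Q (-g) ^ n) V ((p : ℝ) • mean Q g) ≤ signedExp V Q g p n := by
  have hjensen := apply_add_smul_mean_le_stepOp_pow
    (convexOn_stepOp_pow hV.convexOn hQ.1 (-g) n) hQ g p 0
  rwa [zero_add] at hjensen

lemma mul_expDev_sub_le_signedExp (hV : IsSublinear V) (hQ : Q ∈ stdSimplex ℝ β) {C : ℝ}
    (hC : ∀ a, V (-g a) ≤ C) (p s : ℕ) [NeZero (p + s)] :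
    (1 + s / (p + s : ℕ)) * expDev V Q g (p + s) - 2 * s * C ≤
      signedExp V Q g (p + s + s) p := by
  have hM : ((p + s : ℕ) : ℝ) ≠ 0 := Nat.cast_ne_zero.2 (NeZero.ne _)
  rw [sub_le_iff_le_add]
  calc (1 + s / (p + s : ℕ)) * expDev V Q g (p + s)
      = iidExp (p + s) Q fun z => V (((p + s + s : ℕ) : ℝ) • mean Q g +
          (1 + s / (p + s : ℕ) : ℝ) • ∑ k, (-g) (z k)) := by
        have hscale : (1 + s / (p + s : ℕ) : ℝ) * (p + s : ℕ) = (p + s + s : ℕ) := by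
          rw [add_mul, div_mul_cancel₀ _ hM]; push_cast; ring
        rw [mul_expDev hV Q g _ (by positivity), hscale]
    _ ≤ iidExp (p + s) Q (fun z => V (((p + s + s : ℕ) : ℝ) • mean Q g +
          ((p : ℝ) / (p + s : ℕ)) • ∑ k, (-g) (z k)) + 2 * s * C) := by
        refine iidExp_mono hQ.1 fun z => ?_
        have hsplit : (1 + s / (p + s : ℕ) : ℝ) = p / (p + s : ℕ) + 2 * s / (p + s : ℕ) := by
          field_simp; push_cast; ring
        rw [hsplit, add_smul, ← add_assoc]
        refine (hV.add_le _ _).trans (add_le_add_right ?_ _)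
        rw [hV.smul (by positivity)]
        calc 2 * s / (p + s : ℕ) * V (∑ k, (-g) (z k))
            ≤ 2 * s / (p + s : ℕ) * ((p + s : ℕ) * C) := by
              gcongr; exact hV.map_sum_fin_le fun k => hC (z k)
          _ = 2 * s * C := by field_simp
    _ ≤ signedExp V Q g (p + s + s) p + 2 * s * C := by
        rw [iidExp_add, iidExp_const hQ.2]
        gcongr
        exact (iidExp_mean_le_stepOp_pow hV.convexOn hQ (-g) p s _).trans
          (stepOp_pow_smul_mean_le_signedExp hV hQ _ p)

lemma stepOp_pow_sub_smul_mean_le_signedExp (hV : IsSublinear V) (hQ : Q ∈ stdSimplex ℝ β)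
    (p s : ℕ) : (stepOp Q (-g) ^ (p + s)) V (((p : ℝ) - s) • mean Q g) ≤
      signedExp V Q g p (p + s + s) := by
  have hconv := convexOn_stepOp_pow hV.convexOn hQ.1 (-g) (p + s)
  calc (stepOp Q (-g) ^ (p + s)) V (((p : ℝ) - s) • mean Q g)
      = (stepOp Q (-g) ^ (p + s)) V ((p : ℝ) • mean Q g + (s : ℝ) • mean Q (-g)) := by
        rw [mean_neg, smul_neg, sub_smul, sub_eq_add_neg]
    _ ≤ (stepOp Q (-g) ^ s) ((stepOp Q (-g) ^ (p + s)) V) ((p : ℝ) • mean Q g) :=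
        apply_add_smul_mean_le_stepOp_pow hconv hQ (-g) s _
    _ = (stepOp Q (-g) ^ (p + s + s)) V ((p : ℝ) • mean Q g) := by
        rw [← Module.End.mul_apply, ← pow_add, add_comm s]
    _ ≤ signedExp V Q g p (p + s + s) := stepOp_pow_smul_mean_le_signedExp hV hQ p _

lemma mul_expDev_le_signedExp_add (hV : IsSublinear V) (hQ : Q ∈ stdSimplex ℝ β)
    (p s : ℕ) [NeZero (p + s)] :
    (2 - s / (p + s : ℕ)) * expDev V Q g (p + s) ≤
      signedExp V Q g (p + s + s) p + signedExp V Q g p (p + s + s) := by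
  have hM : ((p + s : ℕ) : ℝ) ≠ 0 := Nat.cast_ne_zero.2 (NeZero.ne _)
  set c : Fin (p + s) → ℝ := Fin.append (fun _ => 2) fun _ => 1 with hc
  have hcsum : ∑ k, c k = 2 * p + s := by simp [hc, Fin.sum_univ_add, mul_comm]
  have hcoef : (2 - s / (p + s : ℕ) : ℝ) = (∑ k, c k) / (p + s : ℕ) := by
    rw [hcsum]; field_simp; push_cast; ring
  calc (2 - s / (p + s : ℕ)) * expDev V Q g (p + s)
      = iidExp (p + s) Q fun z => V ((2 * p + s : ℝ) • mean Q g +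
          ((∑ k, c k) / (p + s : ℕ)) • ∑ k, (-g) (z k)) := by
        rw [hcoef, mul_expDev hV Q g _ (by rw [hcsum]; positivity), div_mul_cancel₀ _ hM, hcsum]
    _ ≤ iidExp (p + s) Q fun z => V ((2 * p + s : ℝ) • mean Q g + ∑ k, c k • (-g) (z k)) :=
        iidExp_mean_weight_le hV.convexOn hQ.1 (-g) c _
    _ ≤ iidExp (p + s) Q fun z =>
          V (((p + s + s : ℕ) : ℝ) • mean Q g + ∑ k, (-g) ((z ∘ Fin.castAdd s) k)) +
            V (((p : ℝ) - s) • mean Q g + ∑ k, (-g) (z k)) := by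
        refine iidExp_mono hQ.1 fun z => (congrArg V ?_).trans_le (hV.add_le _ _)
        simp only [hc, Fin.sum_univ_add, Fin.append_left, Fin.append_right, Function.comp_apply,
          ← smul_sum]
        push_cast
        module
    _ = (stepOp Q (-g) ^ p) V (((p + s + s : ℕ) : ℝ) • mean Q g) +
          (stepOp Q (-g) ^ (p + s)) V (((p : ℝ) - s) • mean Q g) := by
        rw [iidExp_add, stepOp_pow_apply, stepOp_pow_apply,
          iidExp_comp_castAdd hQ.2 fun z => V (((p + s + s : ℕ) : ℝ) • mean Q g + ∑ k, (-g) (z k))]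
    _ ≤ signedExp V Q g (p + s + s) p + signedExp V Q g p (p + s + s) :=
        add_le_add (stepOp_pow_smul_mean_le_signedExp hV hQ _ p)
          (stepOp_pow_sub_smul_mean_le_signedExp hV hQ p s)

lemma expDev_le (hV : IsSublinear V) (hQ : Q ∈ stdSimplex ℝ β) {C : ℝ}
    (hC : ∀ a, V (mean Q g - g a) ≤ C) (M : ℕ) : expDev V Q g M ≤ M * C := by
  rw [← iidExp_const hQ.2 (n := M) (M * C)]
  refine iidExp_mono hQ.1 fun z => le_of_eq_of_le (congrArg V ?_)
    (hV.map_sum_fin_le fun k => hC (z k))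
  rw [dev, sum_sub_distrib, sum_const, card_univ, Fintype.card_fin, Nat.cast_smul_eq_nsmul]

section Growth

variable {f : β → E}

lemma stepOp_pow_le_stepOp_pow_add (hV : IsSublinear V) (hQ : Q ∈ stdSimplex ℝ β)
    (hf : mean Q f = 0) (p s : ℕ) :
    (stepOp Q f ^ p) V 0 ≤ (stepOp Q f ^ (p + s)) V 0 := by
  rw [pow_add, Module.End.mul_apply]
  refine monotone_stepOp_pow hQ.1 f p (fun b => ?_) 0
  simpa only [hf, smul_zero, add_zero] using
    apply_add_smul_mean_le_stepOp_pow hV.convexOn hQ f s b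

lemma stepOp_pow_add_le (hV : IsSublinear V) (hQ : Q ∈ stdSimplex ℝ β) (f : β → E) (M s : ℕ)
    [NeZero M] :
    (stepOp Q f ^ (M + s)) V 0 ≤ (1 + s / M) * (stepOp Q f ^ M) V 0 := by
  have hM : (0 : ℝ) < M := Nat.cast_pos.2 (NeZero.pos M)
  have : NeZero (M + s) := ⟨by have := NeZero.pos M; omega⟩
  have hexch := iidExp_mean_le_stepOp_pow hV.convexOn hQ f M s 0
  have hhom : iidExp (M + s) Q (fun z => V (0 + ((M : ℝ) / (M + s : ℕ)) • ∑ k, f (z k))) =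
      M / (M + s : ℕ) * (stepOp Q f ^ (M + s)) V 0 := by
    simp only [stepOp_pow_apply, zero_add, ← iidExp_const_mul,
      hV.smul (show (0 : ℝ) ≤ M / (M + s : ℕ) by positivity)]
  rw [hhom] at hexch
  calc (stepOp Q f ^ (M + s)) V 0
      = (1 + s / M) * (M / (M + s : ℕ) * (stepOp Q f ^ (M + s)) V 0) := by
        push_cast; field_simp
    _ ≤ (1 + s / M) * (stepOp Q f ^ M) V 0 := by gcongr

lemma stepOp_pow_mul_stepOp_pow_le (hV : IsSublinear V) (hQ : Q ∈ stdSimplex ℝ β)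
    (f f' : β → E) (p q : ℕ) : (stepOp Q f ^ p * stepOp Q f' ^ q) V 0 ≤
      (stepOp Q f ^ p) V 0 + (stepOp Q f' ^ q) V 0 := by
  have hstep (b : E) : (stepOp Q f' ^ q) V b ≤ V b + (stepOp Q f' ^ q) V 0 := by
    simp only [stepOp_pow_apply, zero_add]
    rw [← iidExp_const hQ.2 (n := q) (V b), ← iidExp_add]
    exact iidExp_mono hQ.1 fun z => hV.add_le _ _
  calc (stepOp Q f ^ p * stepOp Q f' ^ q) V 0
      ≤ (stepOp Q f ^ p) (fun b => V b + (stepOp Q f' ^ q) V 0) 0 :=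
        monotone_stepOp_pow hQ.1 f p hstep 0
    _ = (stepOp Q f ^ p) V 0 + (stepOp Q f' ^ q) V 0 := by
        simp only [stepOp_pow_apply (f := f), iidExp_add, iidExp_const hQ.2]

end Growth

end Sublinear

section Binomial

/-- The expectation of `F p q` when `p` counts the heads and `q` the tails in `2 * M` tosses of a
fair coin. -/
noncomputable def binomAvg (M : ℕ) (F : ℕ → ℕ → ℝ) : ℝ :=
  (∑ p ∈ antidiagonal (2 * M), (2 * M).choose p.1 * F p.1 p.2) / 4 ^ M

/-- The mean absolute deviation of the number of heads in `2 * M` tosses of a fair coin, divided by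
the number of tosses; equivalently, half the probability of exactly `M` heads. -/
noncomputable def binomDev (M : ℕ) : ℝ := M.centralBinom / (2 * 4 ^ M)

lemma binomAvg_mono {M : ℕ} {F G : ℕ → ℕ → ℝ} (h : ∀ p q, p + q = 2 * M → F p q ≤ G p q) :
    binomAvg M F ≤ binomAvg M G := by
  unfold binomAvg
  gcongr with p hp
  exact h p.1 p.2 (mem_antidiagonal.1 hp)

lemma binomAvg_add (M : ℕ) (F G : ℕ → ℕ → ℝ) :
    binomAvg M (fun p q => F p q + G p q) = binomAvg M F + binomAvg M G := by
  simp only [binomAvg, mul_add, sum_add_distrib, add_div]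

lemma binomAvg_neg (M : ℕ) (F : ℕ → ℕ → ℝ) :
    binomAvg M (fun p q => -F p q) = -binomAvg M F := by
  simp only [binomAvg, mul_neg, sum_neg_distrib, neg_div]

lemma binomAvg_swap (M : ℕ) (F : ℕ → ℕ → ℝ) :
    binomAvg M (fun p q => F q p) = binomAvg M F := by
  unfold binomAvg
  rw [← Nat.sum_antidiagonal_swap]
  refine congrArg (· / (4 : ℝ) ^ M) (sum_congr rfl fun p hp => ?_)
  rw [Prod.fst_swap, Prod.snd_swap, Nat.choose_symm_of_eq_add (mem_antidiagonal.1 hp).symm]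

lemma sum_antidiagonal_choose_two_mul (M : ℕ) :
    ∑ p ∈ antidiagonal (2 * M), ((2 * M).choose p.1 : ℝ) = 4 ^ M := by
  rw [Nat.sum_antidiagonal_eq_sum_range_succ_mk, ← Nat.cast_sum, Nat.sum_range_choose, pow_mul]
  norm_num

lemma choose_two_mul_mul_sub (M n : ℕ) : ((2 * M).choose n : ℝ) * (M - n) =
    (((n + 1 : ℕ) : ℝ) * (2 * M).choose (n + 1) - n * (2 * M).choose n) / 2 := by
  rcases le_or_gt n (2 * M) with hn | hn
  · have hrec : ((2 * M).choose (n + 1) : ℝ) * (n + 1 : ℕ) =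
        (2 * M).choose n * ((2 * M : ℕ) - n) := by
      rw [← Nat.cast_sub hn]
      exact_mod_cast Nat.choose_succ_right_eq (2 * M) n
    push_cast at hrec ⊢
    linear_combination -hrec / 2
  · simp [Nat.choose_eq_zero_of_lt hn, Nat.choose_eq_zero_of_lt (hn.trans n.lt_succ_self)]

lemma sum_choose_mul_abs_sub (M : ℕ) :
    ∑ p ∈ antidiagonal (2 * M), ((2 * M).choose p.1 : ℝ) * |(p.1 : ℝ) - M| =
      M * M.centralBinom := by
  set u : ℕ → ℝ := fun n => n * (2 * M).choose n with hu
  have hbelow : ∑ n ∈ range M, ((2 * M).choose n : ℝ) * |(n : ℝ) - M| = u M / 2 := by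
    have htel : ∑ n ∈ range M, (u (n + 1) - u n) / 2 = u M / 2 := by
      rw [← sum_div, sum_range_sub, show u 0 = 0 by simp [hu], sub_zero]
    rw [← htel]
    refine sum_congr rfl fun n hn => ?_
    have hnM : (n : ℝ) ≤ M := Nat.cast_le.2 (mem_range.1 hn).le
    rw [abs_sub_comm, abs_of_nonneg (sub_nonneg.2 hnM), choose_two_mul_mul_sub]
  have habove : ∑ i ∈ range (M + 1),
      ((2 * M).choose (M + i) : ℝ) * |((M + i : ℕ) : ℝ) - M| = u M / 2 := by
    have htel : ∑ i ∈ range (M + 1), (u (M + i) - u (M + (i + 1))) / 2 = u M / 2 := by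
      rw [← sum_div, sum_range_sub' fun i => u (M + i)]
      simp [hu, Nat.choose_eq_zero_of_lt (by omega : 2 * M < M + (M + 1))]
    rw [← htel]
    refine sum_congr rfl fun i _ => ?_
    rw [abs_of_nonneg (by simp), ← neg_sub, mul_neg, choose_two_mul_mul_sub]
    simp only [hu, ← add_assoc]
    ring
  rw [Nat.sum_antidiagonal_eq_sum_range_succ_mk, show (2 * M).succ = M + (M + 1) by omega,
    sum_range_add, hbelow, habove, Nat.centralBinom_eq_two_mul_choose]
  ring

lemma binomAvg_const_add_mul_abs_sub (M : ℕ) (a b : ℝ) :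
    binomAvg M (fun p _ => a + b * |(p : ℝ) - M|) = a + 2 * (b * M * binomDev M) := by
  simp only [binomAvg, binomDev, mul_add, sum_add_distrib, mul_left_comm _ b, ← mul_sum, ← sum_mul,
    sum_antidiagonal_choose_two_mul, sum_choose_mul_abs_sub]
  field_simp

lemma binomAvg_le {M : ℕ} {F : ℕ → ℕ → ℝ} {a b : ℝ}
    (h : ∀ p s, p + s = M → F (p + s + s) p + F p (p + s + s) ≤ a + b * s) :
    binomAvg M F ≤ a / 2 + b * M * binomDev M := by
  have hpair (p q : ℕ) (hpq : p + q = 2 * M) : F p q + F q p ≤ a + b * |(p : ℝ) - M| := by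
    rcases le_total p M with hpM | hpM
    · obtain ⟨s, rfl⟩ := Nat.exists_eq_add_of_le hpM
      obtain rfl : q = p + s + s := by omega
      have hdist : |(p : ℝ) - (p + s : ℕ)| = s := by simp
      rw [add_comm (F _ _), hdist]
      exact h p s rfl
    · obtain ⟨s, rfl⟩ := Nat.exists_eq_add_of_le (show q ≤ M by omega)
      obtain rfl : p = q + s + s := by omega
      have hdist : |((q + s + s : ℕ) : ℝ) - (q + s : ℕ)| = s := by simp
      rw [hdist]
      exact h q s rfl
  have hsum := binomAvg_mono hpair
  rw [binomAvg_add, binomAvg_swap M F, binomAvg_const_add_mul_abs_sub] at hsum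
  linarith

lemma binomDev_nonneg (M : ℕ) : 0 ≤ binomDev M := by unfold binomDev; positivity

-- The reciprocal of the Wallis product is `(2 * M + 1)` times the squared central probability.
lemma mul_binomDev_sq_le (M : ℕ) : M * binomDev M ^ 2 ≤ (4 * Real.pi)⁻¹ := by
  have hcentral : (M.centralBinom : ℝ) = (2 * M).factorial / M.factorial ^ 2 := by
    rw [Nat.centralBinom_eq_two_mul_choose, Nat.cast_choose ℝ (by omega : M ≤ 2 * M),
      show 2 * M - M = M by omega, sq]
  have hfour : (2 : ℝ) ^ (4 * M) = (4 ^ M) ^ 2 := by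
    rw [← pow_mul, mul_comm M, pow_mul, pow_mul]
    norm_num
  have hwallis : 4 * (2 * M + 1) * binomDev M ^ 2 * Real.Wallis.W M = 1 := by
    rw [Real.Wallis.W_eq_factorial_ratio, binomDev, hcentral, hfour]
    field_simp
    norm_num
  have hratio : (2 * M : ℝ) ≤ (2 * M + 1) * ((2 * M + 1) / (2 * M + 2)) := by
    rw [← mul_div_assoc, le_div_iff₀ (by positivity)]
    nlinarith
  rw [← one_div, le_div_iff₀ (by positivity), ← hwallis]
  calc M * binomDev M ^ 2 * (4 * Real.pi)
      = 4 * binomDev M ^ 2 * (2 * M * (Real.pi / 2)) := by ring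
    _ ≤ 4 * binomDev M ^ 2 *
          ((2 * M + 1) * ((2 * M + 1) / (2 * M + 2)) * (Real.pi / 2)) := by gcongr
    _ = 4 * (2 * M + 1) * binomDev M ^ 2 *
          ((2 * M + 1) / (2 * M + 2) * (Real.pi / 2)) := by ring
    _ ≤ 4 * (2 * M + 1) * binomDev M ^ 2 * Real.Wallis.W M := by
        gcongr
        exact Real.Wallis.le_W M

end Binomial

section SignContraction

variable {E β : Type*} [AddCommGroup E] {V : E → ℝ} {g x y : β → E}

/-- One step of a Rademacher contraction principle: replacing a random sign in front of `g a` by a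
random sign in front of `x a` or `y a`, chosen with equal probability, does not decrease the
expectation of `V`. -/
def SignContraction (V : E → ℝ) (g x y : β → E) : Prop :=
  ∀ a b, V (b + g a) + V (b - g a) ≤ (V (b + x a) + V (b - x a) + V (b + y a) + V (b - y a)) / 2

lemma SignContraction.neg (hstep : SignContraction V g x y) : SignContraction V (-g) x y :=
  fun a b => by
    simpa only [Pi.neg_apply, sub_neg_eq_add, ← sub_eq_add_neg, add_comm] using hstep a b

end SignContraction

section MeanInequalities

variable {E : Type*} {β : Type*} [Fintype β]

lemma binomAvg_pow_mul_pow {A B : Module.End ℝ (E → ℝ)} (hAB : Commute A B) (V : E → ℝ) (b : E)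
    (M : ℕ) : binomAvg M (fun p q => (A ^ p * B ^ q) V b) =
      (((2 : ℝ)⁻¹ • (A + B)) ^ (2 * M)) V b := by
  have hpow : ((2 : ℝ)⁻¹) ^ (2 * M) = (4 ^ M)⁻¹ := by rw [pow_mul, ← inv_pow]; norm_num
  rw [smul_pow, hAB.add_pow', hpow, binomAvg, div_eq_inv_mul]
  simp [LinearMap.sum_apply, Finset.sum_apply]

lemma monotone_inv_two_smul_add {A B : Module.End ℝ (E → ℝ)} (hA : Monotone A)
    (hB : Monotone B) : Monotone ⇑((2 : ℝ)⁻¹ • (A + B)) := fun _ _ h b =>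
  mul_le_mul_of_nonneg_left (add_le_add (hA h b) (hB h b)) (by norm_num)

variable [AddCommGroup E] {V : E → ℝ} {Q : β → ℝ}

/-- The weights of a point drawn from `Q` together with an independent uniform sign. -/
noncomputable def signWeight (Q : β → ℝ) : β × Bool → ℝ := fun a => Q a.1 / 2

lemma signWeight_mem_stdSimplex (hQ : Q ∈ stdSimplex ℝ β) :
    signWeight Q ∈ stdSimplex ℝ (β × Bool) := by
  refine ⟨fun a => div_nonneg (hQ.1 a.1) zero_le_two, ?_⟩
  simp [signWeight, Fintype.sum_prod_type, mul_div_cancel₀, hQ.2]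

/-- The vector `x` multiplied by the given sign, `true` standing for `1` and `false` for `-1`. -/
def withSign (x : β → E) : β × Bool → E := fun a => if a.2 then x a.1 else -x a.1

/-- The expectation of `V` at a Rademacher sum `∑ k, σ k • x (z k)` of `M` terms. -/
noncomputable def radExp (V : E → ℝ) (Q : β → ℝ) (x : β → E) (M : ℕ) : ℝ :=
  (stepOp (signWeight Q) (withSign x) ^ M) V 0

variable [Module ℝ E]

lemma mean_withSign (Q : β → ℝ) (x : β → E) :
    mean (signWeight Q) (withSign x) = 0 := by
  simp [mean, signWeight, withSign, Fintype.sum_prod_type]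

lemma binomAvg_signedExp_le (hV : IsSublinear V) (hQ : Q ∈ stdSimplex ℝ β) {g x y : β → E}
    (hstep : SignContraction V g x y) (M : ℕ) :
    binomAvg M (signedExp V Q g) ≤ binomAvg M fun p q => radExp V Q x p + radExp V Q y q := by
  have hQs := signWeight_mem_stdSimplex hQ
  set X := stepOp (signWeight Q) (withSign x) with hX
  set Y := stepOp (signWeight Q) (withSign y) with hY
  set T := (2 : ℝ)⁻¹ • (stepOp Q g + stepOp Q (-g)) with hT
  set R := (2 : ℝ)⁻¹ • (X + Y) with hR
  have hTR : T V ≤ R V := by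
    intro b
    simp only [hT, hR, hX, hY, LinearMap.smul_apply, LinearMap.add_apply, Pi.smul_apply,
      Pi.add_apply, stepOp_apply, Fintype.sum_prod_type, ← sum_add_distrib]
    gcongr with a
    simp only [signWeight, withSign, Fintype.sum_bool, if_true, Bool.false_eq_true, if_false,
      Pi.neg_apply, ← sub_eq_add_neg]
    linear_combination mul_le_mul_of_nonneg_left (hstep a b) (hQ.1 a)
  have hcomm : Commute T R :=
    (((stepOp_commute _ _ _ _).add_right (stepOp_commute _ _ _ _)).add_left
      ((stepOp_commute _ _ _ _).add_right (stepOp_commute _ _ _ _))).smul_left _ |>.smul_right _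
  have hTmono : Monotone T :=
    monotone_inv_two_smul_add (monotone_stepOp hQ.1 g) (monotone_stepOp hQ.1 (-g))
  have hRmono : Monotone R :=
    monotone_inv_two_smul_add (monotone_stepOp hQs.1 _) (monotone_stepOp hQs.1 _)
  calc binomAvg M (signedExp V Q g) = (T ^ (2 * M)) V 0 :=
        binomAvg_pow_mul_pow (stepOp_commute _ _ _ _) V 0 M
    _ ≤ (R ^ (2 * M)) V 0 := by
        rw [Module.End.coe_pow, Module.End.coe_pow]
        refine Function.Commute.iterate_le_of_map_le ?_ hTmono hRmono hTR _ 0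
        exact fun F => DFunLike.congr_fun hcomm.eq F
    _ = binomAvg M fun p q => (X ^ p * Y ^ q) V 0 :=
        (binomAvg_pow_mul_pow (stepOp_commute _ _ _ _) V 0 M).symm
    _ ≤ binomAvg M fun p q => radExp V Q x p + radExp V Q y q :=
        binomAvg_mono fun p q _ => stepOp_pow_mul_stepOp_pow_le hV hQs _ _ p q

lemma binomAvg_radExp_le (hV : IsSublinear V) (hQ : Q ∈ stdSimplex ℝ β) (x : β → E) (M : ℕ)
    [NeZero M] :
    binomAvg M (fun p _ => radExp V Q x p) ≤ (1 + binomDev M) * radExp V Q x M := by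
  have hQs := signWeight_mem_stdSimplex hQ
  have hM : (M : ℝ) ≠ 0 := Nat.cast_ne_zero.2 (NeZero.ne M)
  refine (binomAvg_le (a := 2 * radExp V Q x M) (b := radExp V Q x M / M) ?_).trans_eq ?_
  · rintro p s rfl
    have hbig := stepOp_pow_add_le hV hQs (withSign x) (p + s) s
    have hsmall := stepOp_pow_le_stepOp_pow_add hV hQs (mean_withSign Q x) p s
    calc radExp V Q x (p + s + s) + radExp V Q x p
        ≤ (1 + s / (p + s : ℕ)) * radExp V Q x (p + s) + radExp V Q x (p + s) :=
          add_le_add hbig hsmall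
      _ = _ := by ring
  · field_simp

lemma mul_expDev_le_binomAvg (hV : IsSublinear V) (hQ : Q ∈ stdSimplex ℝ β) (g : β → E) (M : ℕ)
    [NeZero M] :
    (1 - binomDev M) * expDev V Q g M ≤ binomAvg M (signedExp V Q g) := by
  have hM : (M : ℝ) ≠ 0 := Nat.cast_ne_zero.2 (NeZero.ne M)
  have havg : binomAvg M (fun p q => -signedExp V Q g p q) ≤
      -(2 * expDev V Q g M) / 2 + expDev V Q g M / M * M * binomDev M := by
    refine binomAvg_le ?_
    rintro p s rfl
    have hpair := mul_expDev_le_signedExp_add (g := g) hV hQ p s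
    linear_combination hpair
  rw [binomAvg_neg, div_mul_cancel₀ _ hM] at havg
  linear_combination havg

lemma mul_expDev_add_le_binomAvg (hV : IsSublinear V) (hQ : Q ∈ stdSimplex ℝ β) {g : β → E}
    {C C' : ℝ} (hC : ∀ a, V (g a) ≤ C) (hC' : ∀ a, V (-g a) ≤ C') (M : ℕ) [NeZero M] :
    (1 / 2 + binomDev M) * (expDev V Q g M + expDev V Q (-g) M) -
      2 * binomDev M * (M * (C + C')) ≤ binomAvg M (signedExp V Q g) := by
  have hM : (M : ℝ) ≠ 0 := Nat.cast_ne_zero.2 (NeZero.ne M)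
  set d := expDev V Q g M + expDev V Q (-g) M with hd
  have havg : binomAvg M (fun p q => -signedExp V Q g p q) ≤
      -d / 2 + (2 * (C + C') - d / M) * M * binomDev M := by
    refine binomAvg_le ?_
    rintro p s rfl
    have hplus := mul_expDev_sub_le_signedExp hV hQ hC' p s
    have hminus := mul_expDev_sub_le_signedExp (g := -g) (C := C) hV hQ (by simpa using hC) p s
    rw [signedExp_neg] at hminus
    linear_combination hplus + hminus
  rw [binomAvg_neg, sub_mul, div_mul_cancel₀ _ hM] at havg
  linear_combination havg

end MeanInequalities

section GaussianTails

lemma sqrt_two_mul_log_four_mem_Icc :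
    √(2 * Real.log 4) ∈ Set.Icc (1.664 : ℝ) 1.666 := by
  have hlog : 2 * Real.log 4 = 4 * Real.log 2 := by
    rw [show (4 : ℝ) = 2 ^ 2 by norm_num, Real.log_pow]; push_cast; ring
  rw [hlog]
  constructor
  · exact Real.le_sqrt_of_sq_le (by linarith [Real.log_two_gt_d9])
  · exact Real.sqrt_le_iff.2 ⟨by norm_num, by linarith [Real.log_two_lt_d9]⟩

lemma exp_add_exp_le_four {θ : ℝ} (hθ : θ ∈ Set.Icc (0 : ℝ) 1) :
    Real.exp (1.2769 * (1 - 5 / 9 * θ)) + Real.exp (1 / 4 + 1.76 * θ) / 4 ≤ 4 := by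
  have hlog := Real.log_two_gt_d9
  have hexp_log (k : ℕ) : Real.exp (k * Real.log 2) = 2 ^ k := by
    rw [Real.exp_nat_mul, Real.exp_log two_pos]
  have hconv (s t : ℝ) : Real.exp ((1 - θ) * s + θ * t) ≤
      (1 - θ) * Real.exp s + θ * Real.exp t :=
    convexOn_exp.2 (Set.mem_univ s) (Set.mem_univ t) (sub_nonneg.2 hθ.2) hθ.1 (by ring)
  have hleft : Real.exp 1.2769 ≤ 4 / 1.109 := by
    have h := Real.add_one_le_exp (((2 : ℕ) : ℝ) * Real.log 2 - 1.2769)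
    rw [Real.exp_sub, hexp_log, le_div_iff₀ (Real.exp_pos _)] at h
    rw [le_div_iff₀ (by norm_num)]
    push_cast at h
    nlinarith [Real.exp_pos 1.2769]
  have hleft' : Real.exp (1 / 4) ≤ 4 / 3 := by
    have h := Real.add_one_le_exp (-(1 / 4) : ℝ)
    rw [Real.exp_neg, ← one_div, le_div_iff₀ (Real.exp_pos _)] at h
    linarith
  have hright : Real.exp (1.2769 * (4 / 9)) ≤ 2 := by
    rw [← pow_one (2 : ℝ), ← hexp_log, Real.exp_le_exp]; push_cast; linarith
  have hright' : Real.exp (1 / 4 + 1.76) ≤ 8 := by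
    rw [show (8 : ℝ) = 2 ^ 3 by norm_num, ← hexp_log, Real.exp_le_exp]; push_cast; linarith
  have hfst := hconv 1.2769 (1.2769 * (4 / 9))
  have hsnd := hconv (1 / 4) (1 / 4 + 1.76)
  rw [show 1.2769 * (1 - 5 / 9 * θ) = (1 - θ) * 1.2769 + θ * (1.2769 * (4 / 9)) by ring,
    show 1 / 4 + 1.76 * θ = (1 - θ) * (1 / 4) + θ * (1 / 4 + 1.76) by ring]
  nlinarith [hθ.1, hθ.2]

lemma exp_neg_sq_add_exp_neg_sq_le {p q τ : ℝ} (hp : 0 ≤ p) (hq : 0 ≤ q)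
    (hpq : p + q / 2 ≤ 1.13) (hqp : q + p / 2 ≤ 1.13) (hτ : √(2 * Real.log 4) ≤ τ) :
    Real.exp (-(τ - p) ^ 2) + Real.exp (-(τ - q) ^ 2) ≤ 4 * Real.exp (-τ ^ 2 / 2) := by
  wlog hle : q ≤ p generalizing p q
  · rw [add_comm]; exact this hq hp hqp hpq (le_of_not_ge hle)
  set τ₀ := √(2 * Real.log 4) with hτ₀
  have hτ₀_sq : τ₀ ^ 2 = 2 * Real.log 4 := Real.sq_sqrt (by positivity)
  obtain ⟨hτ₀_ge, hτ₀_le⟩ := sqrt_two_mul_log_four_mem_Icc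
  rw [← hτ₀] at hτ₀_ge hτ₀_le
  set θ := q * (3 / 2.26) with hθ
  have hθ_mem : θ ∈ Set.Icc (0 : ℝ) 1 := ⟨by positivity, by rw [hθ]; linarith⟩
  have hfst : -(τ - p) ^ 2 ≤ 1.2769 * (1 - 5 / 9 * θ) + -τ ^ 2 / 2 := by
    have hp_le : p ≤ 1.13 * (1 - θ / 3) := by rw [hθ]; linarith
    have hp_sq : p ^ 2 ≤ (1.13 * (1 - θ / 3)) ^ 2 := pow_le_pow_left₀ hp hp_le 2
    nlinarith [sq_nonneg (τ - 2 * p), mul_nonneg hθ_mem.1 (sub_nonneg.2 hθ_mem.2)]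
  have hsnd : -(τ - q) ^ 2 ≤ 1 / 4 + 1.76 * θ - Real.log 4 + -τ ^ 2 / 2 := by
    have hq_le : 2 * q ≤ τ₀ := by linarith
    have hmono : (τ₀ - 2 * q) ^ 2 ≤ (τ - 2 * q) ^ 2 :=
      pow_le_pow_left₀ (sub_nonneg.2 hq_le) (by linarith) 2
    have hqθ : (2 * τ₀ - 1) * q ≤ 1.76 * θ := by rw [hθ]; nlinarith
    nlinarith [sq_nonneg (q - 1 / 2)]
  calc Real.exp (-(τ - p) ^ 2) + Real.exp (-(τ - q) ^ 2)
      ≤ Real.exp (1.2769 * (1 - 5 / 9 * θ) + -τ ^ 2 / 2) +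
          Real.exp (1 / 4 + 1.76 * θ - Real.log 4 + -τ ^ 2 / 2) := by gcongr
    _ = (Real.exp (1.2769 * (1 - 5 / 9 * θ)) + Real.exp (1 / 4 + 1.76 * θ) / 4) *
          Real.exp (-τ ^ 2 / 2) := by
        rw [Real.exp_add, Real.exp_add, Real.exp_sub, Real.exp_log four_pos, add_mul]
    _ ≤ 4 * Real.exp (-τ ^ 2 / 2) := by gcongr; exact exp_add_exp_le_four hθ_mem

end GaussianTails

section ExpectedDeviation

variable {E : Type*} [AddCommGroup E] [Module ℝ E] {β : Type*} [Fintype β] {V : E → ℝ}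
  {Q : β → ℝ} {g x y : β → E}

lemma binomAvg_signedExp_le_radExp (hV : IsSublinear V) (hQ : Q ∈ stdSimplex ℝ β)
    (hstep : SignContraction V g x y) (M : ℕ) [NeZero M] :
    binomAvg M (signedExp V Q g) ≤ (1 + binomDev M) * (radExp V Q x M + radExp V Q y M) := by
  refine (binomAvg_signedExp_le hV hQ hstep M).trans ?_
  rw [binomAvg_add, binomAvg_swap M fun p _ => radExp V Q y p, mul_add]
  exact add_le_add (binomAvg_radExp_le hV hQ x M) (binomAvg_radExp_le hV hQ y M)

lemma mul_expDev_le_radExp (hV : IsSublinear V) (hQ : Q ∈ stdSimplex ℝ β)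
    (hstep : SignContraction V g x y) (M : ℕ) [NeZero M] :
    (1 - binomDev M) * expDev V Q g M ≤
      (1 + binomDev M) * (radExp V Q x M + radExp V Q y M) :=
  (mul_expDev_le_binomAvg hV hQ g M).trans (binomAvg_signedExp_le_radExp hV hQ hstep M)

lemma mul_expDev_add_le_radExp (hV : IsSublinear V) (hQ : Q ∈ stdSimplex ℝ β)
    (hstep : SignContraction V g x y) {C C' : ℝ} (hC : ∀ a, V (g a) ≤ C)
    (hC' : ∀ a, V (-g a) ≤ C') (M : ℕ) [NeZero M] :
    (1 / 2 + binomDev M) * (expDev V Q g M + expDev V Q (-g) M) -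
      2 * binomDev M * (M * (C + C')) ≤
      (1 + binomDev M) * (radExp V Q x M + radExp V Q y M) :=
  (mul_expDev_add_le_binomAvg hV hQ hC hC' M).trans (binomAvg_signedExp_le_radExp hV hQ hstep M)

lemma expDev_le_of_range (hV : IsSublinear V) (hQ : Q ∈ stdSimplex ℝ β) {C C' : ℝ}
    (hC : ∀ a, V (g a) ≤ C) (hC' : ∀ a, V (-g a) ≤ C') (M : ℕ) :
    expDev V Q g M ≤ M * (C + C') := by
  refine expDev_le hV hQ (fun a => ?_) M
  have hmean : V (mean Q g) ≤ C := by
    calc V (mean Q g) ≤ ∑ a, Q a • V (g a) :=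
          hV.convexOn.map_sum_le (fun a _ => hQ.1 a) hQ.2 fun a _ => Set.mem_univ _
      _ ≤ ∑ a, Q a • C := sum_le_sum fun a _ => smul_le_smul_of_nonneg_left (hC a) (hQ.1 a)
      _ = C := by rw [← sum_smul, hQ.2, one_smul]
  rw [sub_eq_add_neg]
  exact (hV.add_le _ _).trans (add_le_add hmean (hC' a))

lemma max_sub_add_half_le {κ A x y D : ℝ} (hκ : 0 ≤ κ) (hD : 0 ≤ D)
    (hx : (1 - κ) * x ≤ (1 + κ) * A) (hy : (1 - κ) * y ≤ (1 + κ) * A)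
    (hxy : (1 / 2 + κ) * (x + y) - 4 * κ * D ≤ (1 + κ) * A) (hxD : x ≤ 2 * D) (hyD : y ≤ 2 * D) :
    (max x A - A) + (max y A - A) / 2 ≤ 4 * κ * D := by
  rcases le_total x A with hxA | hxA <;> rcases le_total y A with hyA | hyA
  · rw [max_eq_right hxA, max_eq_right hyA]
    linarith [mul_nonneg hκ hD]
  · rw [max_eq_right hxA, max_eq_left hyA]
    nlinarith
  · rw [max_eq_left hxA, max_eq_right hyA]
    nlinarith
  · rw [max_eq_left hxA, max_eq_left hyA]
    nlinarith

end ExpectedDeviation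

section Concentration

variable {β : Type*} [Fintype β] {Q Q' : β → ℝ}

lemma sum_mul_exp_le (hQ : Q ∈ stdSimplex ℝ β) {f : β → ℝ} {c : ℝ} (hf : ∀ a b, f a ≤ f b + c) :
    ∑ a, Q a * Real.exp (f a) ≤ Real.exp (∑ a, Q a * f a + c ^ 2 / 8) := by
  let _ : MeasurableSpace β := ⊤
  let μ : PMF β := PMF.ofFintype (fun a => ENNReal.ofReal (Q a)) <| by
    rw [← ENNReal.ofReal_sum_of_nonneg fun a _ => hQ.1 a, hQ.2, ENNReal.ofReal_one]
  have hint (F : β → ℝ) : ∫ a, F a ∂μ.toMeasure = ∑ a, Q a * F a := by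
    simp [PMF.integral_eq_sum, μ, PMF.ofFintype_apply, ENNReal.toReal_ofReal (hQ.1 _)]
  obtain ⟨b⟩ := μ.toMeasure.nonempty_of_neZero
  have : Nonempty β := ⟨b⟩
  have hc : 0 ≤ c := by linarith [hf b b]
  obtain ⟨a₀, ha₀⟩ := Finite.exists_min f
  have hmgf := (ProbabilityTheory.hasSubgaussianMGF_of_mem_Icc
    (measurable_of_finite f).aemeasurable
    (.of_forall fun a => ⟨ha₀ a, hf a a₀⟩) : ProbabilityTheory.HasSubgaussianMGF _ _ μ.toMeasure)
    |>.mgf_le 1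
  rw [ProbabilityTheory.mgf, hint, hint] at hmgf
  simp only [one_mul, Real.exp_sub, ← mul_div_assoc, ← sum_div] at hmgf
  rw [div_le_iff₀ (Real.exp_pos _), ← Real.exp_add] at hmgf
  refine hmgf.trans_eq (congrArg Real.exp ?_)
  simp [abs_of_nonneg hc]
  ring

/-- The bounded differences condition: changing one argument increases `F` by at most `c`. -/
def HasBoundedDiff {n : ℕ} (c : ℝ) (F : (Fin n → β) → ℝ) : Prop :=
  ∀ z k a, F (Function.update z k a) ≤ F z + c

lemma iidExp_le_add (hQ : Q ∈ stdSimplex ℝ β) {n : ℕ} {F G : (Fin n → β) → ℝ} {c : ℝ}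
    (h : ∀ z, F z ≤ G z + c) : iidExp n Q F ≤ iidExp n Q G + c := by
  calc iidExp n Q F ≤ iidExp n Q fun z => G z + c := iidExp_mono hQ.1 h
    _ = iidExp n Q G + c := by rw [iidExp_add, iidExp_const hQ.2]

lemma iidExp_exp_le (hQ : Q ∈ stdSimplex ℝ β) {c : ℝ} {n : ℕ} {F : (Fin n → β) → ℝ}
    (hF : HasBoundedDiff c F) :
    iidExp n Q (fun z => Real.exp (F z)) ≤ Real.exp (iidExp n Q F + n * (c ^ 2 / 8)) := by
  induction n with
  | zero => simp [iidExp_zero]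
  | succ n ih =>
    have hfst (a b : β) : iidExp n Q (fun z => F (Fin.cons a z)) ≤
        iidExp n Q (fun z => F (Fin.cons b z)) + c := by
      refine iidExp_le_add hQ fun z => ?_
      simpa only [Fin.update_cons_zero] using hF (Fin.cons b z) 0 a
    have hrest (a : β) : HasBoundedDiff c fun z : Fin n → β => F (Fin.cons a z) := by
      intro z k b
      simpa only [Fin.cons_update] using hF (Fin.cons a z) k.succ b
    rw [iidExp_succ, iidExp_succ]
    calc ∑ a, Q a * iidExp n Q (fun z => Real.exp (F (Fin.cons a z)))
        ≤ ∑ a, Q a * Real.exp (iidExp n Q (fun z => F (Fin.cons a z)) + n * (c ^ 2 / 8)) :=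
          sum_le_sum fun a _ => mul_le_mul_of_nonneg_left (ih (hrest a)) (hQ.1 a)
      _ = (∑ a, Q a * Real.exp (iidExp n Q fun z => F (Fin.cons a z))) *
            Real.exp (n * (c ^ 2 / 8)) := by
          simp only [Real.exp_add, sum_mul, mul_assoc]
      _ ≤ Real.exp (∑ a, Q a * iidExp n Q (fun z => F (Fin.cons a z)) + c ^ 2 / 8) *
            Real.exp (n * (c ^ 2 / 8)) := by
          gcongr; exact sum_mul_exp_le hQ hfst
      _ = _ := by rw [← Real.exp_add]; push_cast; ring_nf

lemma iidExp_iidExp_exp_le (hQ : Q ∈ stdSimplex ℝ β) (hQ' : Q' ∈ stdSimplex ℝ β) {c : ℝ} {n : ℕ}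
    {F : (Fin n → β) → (Fin n → β) → ℝ} (hF : ∀ w, HasBoundedDiff c fun z => F z w)
    (hF' : ∀ z, HasBoundedDiff c (F z)) :
    iidExp n Q (fun z => iidExp n Q' fun w => Real.exp (F z w)) ≤
      Real.exp (iidExp n Q (fun z => iidExp n Q' (F z)) + n * (c ^ 2 / 4)) := by
  calc iidExp n Q (fun z => iidExp n Q' fun w => Real.exp (F z w))
      ≤ iidExp n Q fun z => Real.exp (n * (c ^ 2 / 8)) * Real.exp (iidExp n Q' (F z)) := by
        refine iidExp_mono hQ.1 fun z => ?_
        rw [← Real.exp_add, add_comm]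
        exact iidExp_exp_le hQ' (hF' z)
    _ ≤ Real.exp (n * (c ^ 2 / 8)) *
          Real.exp (iidExp n Q (fun z => iidExp n Q' (F z)) + n * (c ^ 2 / 8)) := by
        rw [iidExp_const_mul]
        gcongr
        exact iidExp_exp_le hQ fun z k a => iidExp_le_add hQ' fun w => hF w z k a
    _ = _ := by rw [← Real.exp_add]; ring_nf

/-- The probability of the event `B` over two independent samples of size `n`, drawn from the
weights `Q` and `Q'`. -/
noncomputable def iidProb₂ (n : ℕ) (Q Q' : β → ℝ) (B : (Fin n → β) → (Fin n → β) → Prop) : ℝ :=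
  iidExp n Q fun z => iidExp n Q' fun w => if B z w then 1 else 0

lemma iidProb₂_lt_le_exp (hQ : Q ∈ stdSimplex ℝ β) (hQ' : Q' ∈ stdSimplex ℝ β) {b c : ℝ} {n : ℕ}
    [NeZero n] (hc : 0 < c) {F : (Fin n → β) → (Fin n → β) → ℝ}
    (hF : ∀ w, HasBoundedDiff c fun z => F z w) (hF' : ∀ z, HasBoundedDiff c (F z))
    (hb : iidExp n Q (fun z => iidExp n Q' (F z)) ≤ b) :
    iidProb₂ n Q Q' (fun z w => b < F z w) ≤
      Real.exp (-(b - iidExp n Q (fun z => iidExp n Q' (F z))) ^ 2 / (n * c ^ 2)) := by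
  have hn : (0 : ℝ) < n := Nat.cast_pos.2 (NeZero.pos n)
  set μ := iidExp n Q fun z => iidExp n Q' (F z)
  set t := 2 * (b - μ) / (n * c ^ 2) with ht
  have ht0 : 0 ≤ t := div_nonneg (by linarith) (by positivity)
  have hscale {G : (Fin n → β) → ℝ} (hG : HasBoundedDiff c G) :
      HasBoundedDiff (t * c) fun z => t * G z := fun z k a =>
    (mul_le_mul_of_nonneg_left (hG z k a) ht0).trans_eq (mul_add t _ _)
  calc iidProb₂ n Q Q' (fun z w => b < F z w)
      ≤ iidExp n Q fun z => iidExp n Q' fun w => Real.exp (-(t * b)) * Real.exp (t * F z w) := by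
        refine iidExp_mono hQ.1 fun z => iidExp_mono hQ'.1 fun w => ?_
        split_ifs with hlt
        · rw [← Real.exp_add]
          exact Real.one_le_exp (by linarith [mul_le_mul_of_nonneg_left hlt.le ht0])
        · positivity
    _ ≤ Real.exp (-(t * b)) * Real.exp (t * μ + n * ((t * c) ^ 2 / 4)) := by
        have hmgf := iidExp_iidExp_exp_le hQ hQ' (fun w => hscale (hF w)) fun z => hscale (hF' z)
        simp only [iidExp_const_mul] at hmgf ⊢
        gcongr
    _ = Real.exp (-(b - μ) ^ 2 / (n * c ^ 2)) := by
        rw [← Real.exp_add, ht]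
        congr 1
        field_simp
        ring

end Concentration

section TwoSamples

variable {E : Type*} [AddCommGroup E] [Module ℝ E] {β : Type*} [Fintype β] {V : E → ℝ}
  {Q Q' : β → ℝ} {g x y : β → E} {M : ℕ} {C C' : ℝ}

lemma dev_neg (Q : β → ℝ) (g : β → E) (z : Fin M → β) : dev Q (-g) z = -dev Q g z := by
  simp only [dev, mean_neg, Pi.neg_apply, sum_neg_distrib, smul_neg, neg_sub, sub_neg_eq_add,
    neg_add_eq_sub]

lemma dev_update (Q : β → ℝ) (g : β → E) (z : Fin M → β) (k : Fin M) (a : β) :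
    dev Q g (Function.update z k a) = dev Q g z + (g (z k) - g a) := by
  have hsum : ∑ i, (g (Function.update z k a i) - g (z i)) = g a - g (z k) := by
    rw [Fintype.sum_eq_single k fun i hi => by rw [Function.update_of_ne hi, sub_self],
      Function.update_self]
  rw [sum_sub_distrib, sub_eq_iff_eq_add] at hsum
  rw [dev, dev, hsum]
  abel

lemma hasBoundedDiff_dev (hV : IsSublinear V) (hC : ∀ a, V (g a) ≤ C) (hC' : ∀ a, V (-g a) ≤ C')
    (Q : β → ℝ) (b : E) : HasBoundedDiff (C + C') fun z : Fin M → β => V (b + dev Q g z) := by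
  intro z k a
  have hrange : V (g (z k) - g a) ≤ C + C' := by
    rw [sub_eq_add_neg]; exact (hV.add_le _ _).trans (add_le_add (hC _) (hC' a))
  simp only [dev_update]
  rw [← add_assoc]
  exact (hV.add_le _ _).trans (add_le_add_right hrange _)

/-- The deviation of the difference of the sums of `g` over two samples, `z` from `Q` and `w` from
`Q'`, from its expectation. -/
noncomputable def pairDev (Q Q' : β → ℝ) (g : β → E) (z w : Fin M → β) : E :=
  dev Q g z - dev Q' g w

lemma iidExp_pairDev_le (hV : IsSublinear V) (hQ : Q ∈ stdSimplex ℝ β)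
    (hQ' : Q' ∈ stdSimplex ℝ β) (g : β → E) (M : ℕ) :
    iidExp M Q (fun z => iidExp M Q' fun w => V (pairDev Q Q' g z w)) ≤
      expDev V Q g M + expDev V Q' (-g) M := by
  calc iidExp M Q (fun z => iidExp M Q' fun w => V (pairDev Q Q' g z w))
      ≤ iidExp M Q fun z => iidExp M Q' fun w => V (dev Q g z) + V (dev Q' (-g) w) := by
        refine iidExp_mono hQ.1 fun z => iidExp_mono hQ'.1 fun w => ?_
        rw [pairDev, sub_eq_add_neg, ← dev_neg]
        exact hV.add_le _ _
    _ = expDev V Q g M + expDev V Q' (-g) M := by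
        simp only [iidExp_add, iidExp_const hQ.2, iidExp_const hQ'.2, expDev]

lemma iidProb₂_lt_pairDev_le (hV : IsSublinear V) (hQ : Q ∈ stdSimplex ℝ β)
    (hQ' : Q' ∈ stdSimplex ℝ β) (hC : ∀ a, V (g a) ≤ C) (hC' : ∀ a, V (-g a) ≤ C')
    (hCC' : 0 < C + C') [NeZero M] {μ b : ℝ} (hμ : expDev V Q g M + expDev V Q' (-g) M ≤ μ)
    (hb : μ ≤ b) :
    iidProb₂ M Q Q' (fun z w => b < V (pairDev Q Q' g z w)) ≤
      Real.exp (-(b - μ) ^ 2 / (M * (C + C') ^ 2)) := by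
  have hmean := (iidExp_pairDev_le hV hQ hQ' g M).trans hμ
  refine (iidProb₂_lt_le_exp hQ hQ' hCC' (fun w => ?_) (fun z => ?_) (hmean.trans hb)).trans ?_
  · simpa only [pairDev, sub_eq_neg_add] using hasBoundedDiff_dev hV hC hC' Q (-dev Q' g w)
  · simpa only [pairDev, sub_eq_add_neg, ← dev_neg, add_comm C] using
      hasBoundedDiff_dev (g := -g) hV hC' (by simpa using hC) Q' (dev Q g z)
  · gcongr

lemma four_mul_binomDev_mul_sqrt_le (M : ℕ) : 4 * binomDev M * √M ≤ 1.13 := by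
  have hpi : (4 * Real.pi)⁻¹ ≤ 1.13 ^ 2 / 16 := by
    rw [inv_le_comm₀ (by positivity) (by norm_num)]
    linarith [Real.pi_gt_d4]
  refine le_of_sq_le_sq ?_ (by norm_num)
  rw [mul_pow, Real.sq_sqrt (Nat.cast_nonneg M)]
  linarith [mul_binomDev_sq_le M]

lemma iidProb₂_lt_pairDev_le_exp (hV : IsSublinear V) (hQ : Q ∈ stdSimplex ℝ β)
    (hQ' : Q' ∈ stdSimplex ℝ β) (hC : ∀ a, V (g a) ≤ C) (hC' : ∀ a, V (-g a) ≤ C')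
    (hCC' : 0 < C + C') [NeZero M] {A p τ : ℝ} (hpτ : p ≤ τ)
    (hp : expDev V Q g M + expDev V Q' (-g) M ≤ A + (C + C') * √M * p) :
    iidProb₂ M Q Q' (fun z w => A + (C + C') * √M * τ < V (pairDev Q Q' g z w)) ≤
      Real.exp (-(τ - p) ^ 2) := by
  have hM : (0 : ℝ) < M := Nat.cast_pos.2 (NeZero.pos M)
  refine (iidProb₂_lt_pairDev_le hV hQ hQ' hC hC' hCC' hp (by gcongr)).trans_eq ?_
  rw [add_sub_add_left_eq_sub, ← mul_sub, mul_pow, mul_pow, Real.sq_sqrt hM.le]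
  congr 1
  field_simp

lemma pairDev_neg (Q Q' : β → ℝ) (g : β → E) (z w : Fin M → β) :
    pairDev Q Q' (-g) z w = -pairDev Q Q' g z w := by
  simp only [pairDev, dev_neg, sub_eq_add_neg, neg_add]

lemma max_expDev_add_sub_add_half_le (hV : IsSublinear V) (hQ : Q ∈ stdSimplex ℝ β)
    (hQ' : Q' ∈ stdSimplex ℝ β) (hC : ∀ a, V (g a) ≤ C) (hC' : ∀ a, V (-g a) ≤ C')
    (hCC' : 0 ≤ C + C') [NeZero M] (hstep : SignContraction V g x y) {A : ℝ}
    (hA : A = radExp V Q x M + radExp V Q y M + (radExp V Q' x M + radExp V Q' y M)) :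
    (max (expDev V Q g M + expDev V Q' (-g) M) A - A) +
        (max (expDev V Q (-g) M + expDev V Q' g M) A - A) / 2 ≤
      4 * binomDev M * (M * (C + C')) := by
  have hCneg : ∀ a, V (-(-g) a) ≤ C := by simpa using hC
  subst hA
  refine max_sub_add_half_le (binomDev_nonneg M) (by positivity) ?_ ?_ ?_ ?_ ?_
  · linarith [mul_expDev_le_radExp hV hQ hstep M, mul_expDev_le_radExp hV hQ' hstep.neg M]
  · linarith [mul_expDev_le_radExp hV hQ hstep.neg M, mul_expDev_le_radExp hV hQ' hstep M]
  · linarith [mul_expDev_add_le_radExp hV hQ hstep hC hC' M,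
      mul_expDev_add_le_radExp hV hQ' hstep hC hC' M]
  · linarith [expDev_le_of_range hV hQ hC hC' M,
      expDev_le_of_range (g := -g) hV hQ' hC' hCneg M]
  · linarith [expDev_le_of_range (g := -g) hV hQ hC' hCneg M,
      expDev_le_of_range hV hQ' hC hC' M]

lemma exists_expDev_add_le (hV : IsSublinear V) (hQ : Q ∈ stdSimplex ℝ β)
    (hQ' : Q' ∈ stdSimplex ℝ β) (hC : ∀ a, V (g a) ≤ C) (hC' : ∀ a, V (-g a) ≤ C')
    (hCC' : 0 < C + C') [NeZero M] (hstep : SignContraction V g x y) {A : ℝ}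
    (hA : A = radExp V Q x M + radExp V Q y M + (radExp V Q' x M + radExp V Q' y M)) :
    ∃ p q : ℝ, 0 ≤ p ∧ 0 ≤ q ∧ p + q / 2 ≤ 1.13 ∧ q + p / 2 ≤ 1.13 ∧
      expDev V Q g M + expDev V Q' (-g) M ≤ A + (C + C') * √M * p ∧
      expDev V Q (-g) M + expDev V Q' g M ≤ A + (C + C') * √M * q := by
  have hM : (0 : ℝ) < M := Nat.cast_pos.2 (NeZero.pos M)
  set σ := (C + C') * √M with hσ
  have hσ0 : 0 < σ := by positivity
  have hscale : 4 * binomDev M * (M * (C + C')) ≤ 1.13 * σ := by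
    calc 4 * binomDev M * (M * (C + C')) = 4 * binomDev M * √M * σ := by
          nth_rw 1 [hσ, ← Real.mul_self_sqrt hM.le]; ring
      _ ≤ 1.13 * σ := by gcongr; exact four_mul_binomDev_mul_sqrt_le M
  have hnonneg (U : ℝ) : 0 ≤ (max U A - A) / σ :=
    div_nonneg (sub_nonneg.2 (le_max_right _ _)) hσ0.le
  have hexcess (U : ℝ) : U ≤ A + σ * ((max U A - A) / σ) := by
    rw [mul_div_cancel₀ _ hσ0.ne', add_sub_cancel]; exact le_max_left _ _
  refine ⟨_, _, hnonneg _, hnonneg _, ?_, ?_, hexcess _, hexcess _⟩ <;>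
    rw [div_right_comm, ← add_div, div_le_iff₀ hσ0]
  · exact (max_expDev_add_sub_add_half_le hV hQ hQ' hC hC' hCC'.le hstep hA).trans hscale
  · have hneg := max_expDev_add_sub_add_half_le (g := -g) (C := C') (C' := C) hV hQ hQ' hC'
      (by simpa using hC) (by linarith) hstep.neg hA
    rw [neg_neg, add_comm C' C] at hneg
    exact hneg.trans hscale

lemma iidProb₂_pairDev_add_le (hV : IsSublinear V) (hQ : Q ∈ stdSimplex ℝ β)
    (hQ' : Q' ∈ stdSimplex ℝ β) (hC : ∀ a, V (g a) ≤ C) (hC' : ∀ a, V (-g a) ≤ C')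
    (hCC' : 0 < C + C') [NeZero M] (hstep : SignContraction V g x y) {A τ : ℝ}
    (hA : A = radExp V Q x M + radExp V Q y M + (radExp V Q' x M + radExp V Q' y M))
    (hτ : √(2 * Real.log 4) ≤ τ) :
    iidProb₂ M Q Q' (fun z w => A + (C + C') * √M * τ < V (pairDev Q Q' g z w)) +
        iidProb₂ M Q Q' (fun z w => A + (C + C') * √M * τ < V (-pairDev Q Q' g z w)) ≤
      4 * Real.exp (-τ ^ 2 / 2) := by
  obtain ⟨p, q, hp, hq, hpq, hqp, hX, hY⟩ := exists_expDev_add_le hV hQ hQ' hC hC' hCC' hstep hA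
  have hτ' := sqrt_two_mul_log_four_mem_Icc.1.trans hτ
  have hpτ : p ≤ τ := by norm_num at hpq hτ'; linarith
  have hqτ : q ≤ τ := by norm_num at hqp hτ'; linarith
  have htail := iidProb₂_lt_pairDev_le_exp hV hQ hQ' hC hC' hCC' hpτ hX
  have htail' := iidProb₂_lt_pairDev_le_exp (g := -g) (C := C') (C' := C) hV hQ hQ' hC'
    (by simpa using hC) (by linarith) hqτ (by rwa [neg_neg, add_comm C' C])
  simp only [pairDev_neg, add_comm C' C] at htail'
  exact (add_le_add htail htail').trans (exp_neg_sq_add_exp_neg_sq_le hp hq hpq hqp hτ)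

lemma iidProb₂_pairDev_add_le_of_lt_one (hV : IsSublinear V) (hQ : Q ∈ stdSimplex ℝ β)
    (hQ' : Q' ∈ stdSimplex ℝ β) (hC : ∀ a, V (g a) ≤ C) (hC' : ∀ a, V (-g a) ≤ C')
    (hCC' : 0 < C + C') [NeZero M] (hstep : SignContraction V g x y) {A b δ : ℝ}
    (hA : A = radExp V Q x M + radExp V Q y M + (radExp V Q' x M + radExp V Q' y M))
    (hδ : δ ∈ Set.Ioo (0 : ℝ) 1) (hb : b = A + M * ((C + C') * √(2 * Real.log (4 / δ) / M))) :
    iidProb₂ M Q Q' (fun z w => b < V (pairDev Q Q' g z w)) +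
      iidProb₂ M Q Q' (fun z w => b < V (-pairDev Q Q' g z w)) ≤ δ := by
  have hδ4 : 4 ≤ 4 / δ := le_div_self zero_le_four hδ.1 hδ.2.le
  have hlog : 0 ≤ 2 * Real.log (4 / δ) := by
    have := Real.log_nonneg (show 1 ≤ 4 / δ by linarith)
    positivity
  have hbτ : b = A + (C + C') * √M * √(2 * Real.log (4 / δ)) := by
    rw [hb, Real.sqrt_div hlog, mul_left_comm, mul_assoc, mul_div_assoc', mul_div_right_comm,
      Real.div_sqrt]
  have htail := iidProb₂_pairDev_add_le (τ := √(2 * Real.log (4 / δ))) hV hQ hQ' hC hC' hCC'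
    hstep hA (by gcongr)
  have hexp : 4 * Real.exp (-√(2 * Real.log (4 / δ)) ^ 2 / 2) = δ := by
    rw [Real.sq_sqrt hlog, neg_div, mul_div_cancel_left₀ _ two_ne_zero, ← Real.log_inv,
      Real.exp_log (by linarith [inv_pos.2 (zero_lt_four.trans_le hδ4)]), inv_div,
      mul_div_cancel₀ _ four_ne_zero]
  rwa [hexp, ← hbτ] at htail

end TwoSamples

section UnionBound

variable {β : Type*} [Fintype β] {Q Q' : β → ℝ}

lemma one_sub_add_le_iidProb₂ (hQ : Q ∈ stdSimplex ℝ β) (hQ' : Q' ∈ stdSimplex ℝ β) {n : ℕ}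
    {B B' G : (Fin n → β) → (Fin n → β) → Prop} (h : ∀ z w, ¬B z w → ¬B' z w → G z w) :
    1 - (iidProb₂ n Q Q' B + iidProb₂ n Q Q' B') ≤ iidProb₂ n Q Q' G := by
  rw [sub_le_iff_le_add]
  calc 1 = iidExp n Q fun _ => iidExp n Q' fun _ => 1 := by
        simp only [iidExp_const hQ.2, iidExp_const hQ'.2]
    _ ≤ iidExp n Q (fun z => iidExp n Q' fun w => (if G z w then (1 : ℝ) else 0) +
          ((if B z w then 1 else 0) + if B' z w then 1 else 0)) := by
        refine iidExp_mono hQ.1 fun z => iidExp_mono hQ'.1 fun w => ?_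
        have hcover := h z w
        split_ifs <;> first | tauto | norm_num
    _ = iidProb₂ n Q Q' G + (iidProb₂ n Q Q' B + iidProb₂ n Q Q' B') := by
        simp only [iidExp_add, iidProb₂]

lemma prSample2_eq_iidProb₂ {m n : ℕ} (M : ℕ) (P P' : Fin m × Fin n → ℝ)
    (B : (Fin M → Fin m × Fin n) → (Fin M → Fin m × Fin n) → Prop) :
    prSample2 M P P' B = iidProb₂ M P P' B := by
  simp only [prSample2, iidProb₂, iidExp, mul_ite, mul_one, mul_zero, mul_sum]

end UnionBound

section SupCoord

variable {ι β : Type*}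

/-- The supremum of the coordinates of a bounded family. Boundedness is built into the type, so that
this is never the junk value `0` of an unbounded supremum. -/
noncomputable def supCoord (B : lp (fun _ : ι => ℝ) ⊤) : ℝ := ⨆ i, B i

lemma apply_le_supCoord (B : lp (fun _ : ι => ℝ) ⊤) (i : ι) : B i ≤ supCoord B :=
  le_ciSup (f := fun i => B i) ⟨‖B‖, by
    rintro _ ⟨j, rfl⟩
    exact (le_abs_self _).trans (lp.norm_apply_le_norm ENNReal.top_ne_zero B j)⟩ i

lemma supCoord_le [Nonempty ι] {B : lp (fun _ : ι => ℝ) ⊤} {C : ℝ} (h : ∀ i, B i ≤ C) :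
    supCoord B ≤ C := ciSup_le h

lemma isSublinear_supCoord [Nonempty ι] :
    IsSublinear (supCoord : lp (fun _ : ι => ℝ) ⊤ → ℝ) where
  add_le a b := supCoord_le fun i => add_le_add (apply_le_supCoord a i) (apply_le_supCoord b i)
  smul _ ht a := (Real.mul_iSup_of_nonneg ht fun i => a i).symm

lemma add_add_abs_sub_le_supCoord (b x : lp (fun _ : ι => ℝ) ⊤) (i j : ι) :
    b i + b j + |x i - x j| ≤ supCoord (b + x) + supCoord (b - x) := by
  have hadd (k : ι) : b k + x k ≤ supCoord (b + x) := apply_le_supCoord (b + x) k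
  have hsub (k : ι) : b k - x k ≤ supCoord (b - x) := apply_le_supCoord (b - x) k
  rcases abs_cases (x i - x j) with ⟨habs, _⟩ | ⟨habs, _⟩ <;> rw [habs]
  · linarith [hadd i, hsub j]
  · linarith [hadd j, hsub i]

lemma signContraction_supCoord [Nonempty ι] {g x y : β → lp (fun _ : ι => ℝ) ⊤}
    (h : ∀ a i j, g a i - g a j ≤ (|x a i - x a j| + |y a i - y a j|) / 2) :
    SignContraction supCoord g x y := by
  intro a b
  rw [← le_sub_iff_add_le]
  refine supCoord_le fun i => ?_
  rw [le_sub_comm]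
  refine supCoord_le fun j => ?_
  have hx := add_add_abs_sub_le_supCoord b (x a) i j
  have hy := add_add_abs_sub_le_supCoord b (y a) i j
  calc (b - g a) j = b j - g a j := rfl
    _ ≤ _ - (b i + g a i) := by linarith [h a i j]

end SupCoord

section LossVectors

variable {m n : ℕ} {ℓ : ℝ → ℝ → ℝ} {Δ : ℝ} {H : Set (Fin m → Fin n → ℝ)}

/-- The losses at one user–item pair of all pairs of hypotheses. -/
noncomputable def lossVec (hℓ : ∀ a b, ℓ a b ∈ Set.Icc 0 Δ) (H : Set (Fin m → Fin n → ℝ))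
    (p : Fin m × Fin n) : lp (fun _ : H × H => ℝ) ⊤ :=
  ⟨fun R => ℓ (R.1.1 p.1 p.2) (R.2.1 p.1 p.2), memℓp_infty ⟨Δ, by
    rintro _ ⟨R, rfl⟩
    exact (Real.norm_of_nonneg (hℓ _ _).1).trans_le (hℓ _ _).2⟩⟩

lemma supCoord_lossVec_le [Nonempty H] (hℓ : ∀ a b, ℓ a b ∈ Set.Icc 0 Δ) (p : Fin m × Fin n) :
    supCoord (lossVec hℓ H p) ≤ Δ :=
  supCoord_le fun _ => (hℓ _ _).2

lemma supCoord_neg_lossVec_le [Nonempty H] (hℓ : ∀ a b, ℓ a b ∈ Set.Icc 0 Δ)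
    (p : Fin m × Fin n) : supCoord (-lossVec hℓ H p) ≤ 0 :=
  supCoord_le fun _ => neg_nonpos.2 (hℓ _ _).1

/-- The entries at one user–item pair, scaled by `t`, of a family `π` of hypotheses. -/
noncomputable def entryVec (hHb : ∃ C : ℝ, ∀ R ∈ H, ∀ u i, |R u i| ≤ C) {ι : Type*} (t : ℝ)
    (π : ι → H) (p : Fin m × Fin n) : lp (fun _ : ι => ℝ) ⊤ :=
  ⟨fun i => t * (π i).1 p.1 p.2, Memℓp.const_mul (f := fun i => (π i).1 p.1 p.2) (memℓp_infty <|
    hHb.imp fun _ hC => Set.forall_mem_range.2 fun i => hC _ (π i).2 p.1 p.2) t⟩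

lemma signContraction_lossVec [Nonempty H] (hℓ : ∀ a b, ℓ a b ∈ Set.Icc 0 Δ)
    (hHb : ∃ C : ℝ, ∀ R ∈ H, ∀ u i, |R u i| ≤ C) {L : ℝ} (hL : 0 ≤ L)
    (hLip1 : ∀ a a' b : ℝ, |ℓ a b - ℓ a' b| ≤ L * |a - a'|)
    (hLip2 : ∀ a b b' : ℝ, |ℓ a b - ℓ a b'| ≤ L * |b - b'|) :
    SignContraction supCoord (lossVec hℓ H) (entryVec hHb (2 * L) Prod.fst)
      (entryVec hHb (2 * L) Prod.snd) := by
  refine signContraction_supCoord fun p R S => ?_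
  have hscale (u v : ℝ) : |2 * L * u - 2 * L * v| = 2 * (L * |u - v|) := by
    rw [← mul_sub, abs_mul, abs_of_nonneg (by positivity), mul_assoc]
  set r₁ := R.1.1 p.1 p.2
  set r₂ := R.2.1 p.1 p.2
  set s₁ := S.1.1 p.1 p.2
  set s₂ := S.2.1 p.1 p.2
  calc ℓ r₁ r₂ - ℓ s₁ s₂ = (ℓ r₁ r₂ - ℓ s₁ r₂) + (ℓ s₁ r₂ - ℓ s₁ s₂) := by ring
    _ ≤ L * |r₁ - s₁| + L * |r₂ - s₂| :=
        add_le_add ((le_abs_self _).trans (hLip1 _ _ _)) ((le_abs_self _).trans (hLip2 _ _ _))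
    _ = (|2 * L * r₁ - 2 * L * s₁| + |2 * L * r₂ - 2 * L * s₂|) / 2 := by
        rw [hscale, hscale]; ring

lemma sum_empDist_mul {M : ℕ} (S : Fin M → Fin m × Fin n) (f : Fin m × Fin n → ℝ) :
    ∑ p, empDist S p * f p = 1 / M * ∑ k, f (S k) := by
  rw [← sum_fiberwise (s := univ) (g := S), mul_sum]
  refine sum_congr rfl fun p _ => ?_
  rw [sum_congr rfl fun k hk => congrArg f (mem_filter.1 hk).2, sum_const, nsmul_eq_mul, empDist,
    mul_assoc]

lemma dev_lossVec_apply {M : ℕ} [NeZero M] (hℓ : ∀ a b, ℓ a b ∈ Set.Icc 0 Δ)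
    (P : Fin m × Fin n → ℝ) (S : Fin M → Fin m × Fin n) (R : H × H) :
    dev P (lossVec hℓ H) S R = M * (wLoss ℓ P R.1 R.2 - wLoss ℓ (empDist S) R.1 R.2) := by
  have hM : (M : ℝ) ≠ 0 := Nat.cast_ne_zero.2 (NeZero.ne M)
  rw [wLoss, wLoss, sum_empDist_mul S fun p => ℓ (R.1.1 p.1 p.2) (R.2.1 p.1 p.2), mul_sub,
    ← mul_assoc, mul_one_div_cancel hM, one_mul]
  simp only [dev, mean, lp.coeFn_sub, lp.coeFn_smul, lp.coeFn_sum, Pi.sub_apply, Pi.smul_apply,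
    Finset.sum_apply, smul_eq_mul, lossVec]

lemma pairDev_lossVec_apply {M : ℕ} [NeZero M] (hℓ : ∀ a b, ℓ a b ∈ Set.Icc 0 Δ)
    (P P' : Fin m × Fin n → ℝ) (S S' : Fin M → Fin m × Fin n) (R : H × H) :
    pairDev P P' (lossVec hℓ H) S S' R =
      M * ((wLoss ℓ P R.1 R.2 - wLoss ℓ P' R.1 R.2) -
        (wLoss ℓ (empDist S) R.1 R.2 - wLoss ℓ (empDist S') R.1 R.2)) := by
  rw [pairDev, lp.coeFn_sub, Pi.sub_apply, dev_lossVec_apply, dev_lossVec_apply]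
  ring

lemma iidExp_signWeight {β : Type*} [Fintype β] (Q : β → ℝ) (M : ℕ)
    (F : (Fin M → β × Bool) → ℝ) :
    iidExp M (signWeight Q) F =
      ∑ S : Fin M → β, (∏ k, Q (S k)) *
        ∑ σ : Fin M → Bool, ((1 : ℝ) / 2) ^ M * F fun k => (S k, σ k) := by
  rw [iidExp, ← (Equiv.arrowProdEquivProdArrow (Fin M) (fun _ => β) fun _ => Bool).symm.sum_comp,
    Fintype.sum_prod_type]
  refine sum_congr rfl fun S _ => ?_
  rw [mul_sum]
  refine sum_congr rfl fun σ _ => ?_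
  have hweight : ∏ k, signWeight Q (S k, σ k) = (∏ k, Q (S k)) * (1 / 2) ^ M := by
    simp only [signWeight, div_eq_mul_one_div (Q _), prod_mul_distrib, prod_const, card_univ,
      Fintype.card_fin]
  rw [← mul_assoc, ← hweight]
  rfl

lemma supCoord_sum_withSign_entryVec (hHb : ∃ C : ℝ, ∀ R ∈ H, ∀ u i, |R u i| ≤ C) {ι : Type*}
    {t : ℝ} (ht : 0 ≤ t) {π : ι → H} (hπ : π.Surjective) {M : ℕ} [NeZero M]
    (S : Fin M → Fin m × Fin n) (σ : Fin M → Bool) :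
    supCoord (∑ k, withSign (entryVec hHb t π) (S k, σ k)) =
      t * M * sSup ((fun f => 1 / (M : ℝ) * ∑ k, (if σ k then (1 : ℝ) else -1) * f (S k)) ''
        ((fun (R : Fin m → Fin n → ℝ) (p : Fin m × Fin n) => R p.1 p.2) '' H)) := by
  have hM : (M : ℝ) ≠ 0 := Nat.cast_ne_zero.2 (NeZero.ne M)
  have hsign (k : Fin M) (i : ι) : withSign (entryVec hHb t π) (S k, σ k) i =
      t * ((if σ k then (1 : ℝ) else -1) * (π i).1 (S k).1 (S k).2) := by
    cases σ k
    · simp only [withSign, Bool.false_eq_true, if_false, neg_one_mul, mul_neg]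
      rfl
    · simp only [withSign, if_true, one_mul]
      rfl
  rw [Set.image_image, sSup_image', ← hπ.iSup_comp, Real.mul_iSup_of_nonneg (by positivity),
    supCoord]
  refine iSup_congr fun i => ?_
  simp only [lp.coeFn_sum, Finset.sum_apply, hsign, ← mul_sum]
  field_simp

lemma radExp_entryVec (hHb : ∃ C : ℝ, ∀ R ∈ H, ∀ u i, |R u i| ≤ C) {ι : Type*}
    {t : ℝ} (ht : 0 ≤ t) {π : ι → H} (hπ : π.Surjective) (P : Fin m × Fin n → ℝ) (M : ℕ)
    [NeZero M] :
    radExp supCoord P (entryVec hHb t π) M = t * M * matRademacher M P H := by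
  rw [radExp, stepOp_pow_apply, iidExp_signWeight]
  simp only [zero_add, supCoord_sum_withSign_entryVec hHb ht hπ, matRademacher, rademacher, mul_sum]
  refine sum_congr rfl fun S _ => sum_congr rfl fun σ _ => ?_
  ring

end LossVectors

section Divergence

variable {m n : ℕ} {ℓ : ℝ → ℝ → ℝ} {Δ : ℝ} {H : Set (Fin m → Fin n → ℝ)}

lemma sSup_image_le_sSup_image_add {α : Type*} {s : Set α} {f g : α → ℝ} {B : ℝ}
    (hs : s.Nonempty) (hg : BddAbove (g '' s)) (h : ∀ r ∈ s, f r ≤ g r + B) :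
    sSup (f '' s) ≤ sSup (g '' s) + B := by
  refine csSup_le (hs.image f) ?_
  rintro _ ⟨r, hr, rfl⟩
  exact (h r hr).trans (add_le_add_left (le_csSup hg ⟨r, hr, rfl⟩) B)

lemma abs_wLoss_le (hℓ : ∀ a b, ℓ a b ∈ Set.Icc 0 Δ) (P : Fin m × Fin n → ℝ)
    (A B : Fin m → Fin n → ℝ) : |wLoss ℓ P A B| ≤ ∑ p, |P p| * Δ := by
  refine (abs_sum_le_sum_abs _ _).trans (sum_le_sum fun p _ => ?_)
  rw [abs_mul, abs_of_nonneg (hℓ _ _).1]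
  exact mul_le_mul_of_nonneg_left (hℓ _ _).2 (abs_nonneg _)

lemma bddAbove_wLoss_sub (hℓ : ∀ a b, ℓ a b ∈ Set.Icc 0 Δ) (P P' : Fin m × Fin n → ℝ)
    (A : Fin m → Fin n → ℝ) (H : Set (Fin m → Fin n → ℝ)) :
    BddAbove ((fun R => wLoss ℓ P A R - wLoss ℓ P' A R) '' H) := by
  refine ⟨∑ p, |P p| * Δ + ∑ p, |P' p| * Δ, ?_⟩
  rintro _ ⟨R, -, rfl⟩
  linarith [abs_le.1 (abs_wLoss_le hℓ P A R), abs_le.1 (abs_wLoss_le hℓ P' A R)]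

lemma abs_PMD_sub_le_of_supCoord_le (hℓ : ∀ a b, ℓ a b ∈ Set.Icc 0 Δ) {M : ℕ} [NeZero M]
    {P P' : Fin m × Fin n → ℝ} {S S' : Fin M → Fin m × Fin n} {B : ℝ}
    (h : supCoord (pairDev P P' (lossVec hℓ H) S S') ≤ M * B)
    (h' : supCoord (-pairDev P P' (lossVec hℓ H) S S') ≤ M * B) {A : Fin m → Fin n → ℝ}
    (hA : A ∈ H) : |PMD ℓ H A P P' - PMD ℓ H A (empDist S) (empDist S')| ≤ B := by
  have hM : (0 : ℝ) < M := Nat.cast_pos.2 (NeZero.pos M)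
  rw [abs_sub_le_iff, sub_le_iff_le_add', sub_le_iff_le_add']
  constructor <;> refine sSup_image_le_sSup_image_add ⟨A, hA⟩ (bddAbove_wLoss_sub hℓ _ _ A H)
    fun R hR => sub_le_iff_le_add'.1 (le_of_mul_le_mul_left ?_ hM)
  · rw [← pairDev_lossVec_apply hℓ P P' S S' (⟨A, hA⟩, ⟨R, hR⟩)]
    exact (apply_le_supCoord _ _).trans h
  · rw [← neg_sub, mul_neg, ← pairDev_lossVec_apply hℓ P P' S S' (⟨A, hA⟩, ⟨R, hR⟩)]
    exact (apply_le_supCoord _ (⟨A, hA⟩, ⟨R, hR⟩)).trans h'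

end Divergence

end PMDDeviation

/-- **Deviation bound for the propensity matrix divergence (Lemma 1).**
If `ℓ` is `L`-Lipschitz in each argument and `H` is a nonempty, uniformly bounded
class of real `m × n` matrices, and `S`, `S'` are independent i.i.d. samples of size
`M` from the distributions `P` and `P'` on `D`, then for every `δ ∈ (0, 1)`, with
probability at least `1 − δ`, for every `R̂ ∈ H`:
`|ψ_{R̂,H}(P, P') − ψ_{R̂,H}(P̂_S, P̂_{S'})|
  ≤ 4L (R_{P,M}(H) + R_{P',M}(H)) + Δ √(2 log(4/δ)/M)`. -/
theorem pmd_deviation_bound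
    (m n : ℕ) (hm : 1 ≤ m) (hn : 1 ≤ n)
    (Δ : ℝ) (hΔ : 0 < Δ)
    (ℓ : ℝ → ℝ → ℝ) (hℓ : ∀ a b : ℝ, ℓ a b ∈ Set.Icc (0 : ℝ) Δ)
    (L : ℝ) (hL : 0 < L)
    (hLip1 : ∀ a a' b : ℝ, |ℓ a b - ℓ a' b| ≤ L * |a - a'|)
    (hLip2 : ∀ a b b' : ℝ, |ℓ a b - ℓ a b'| ≤ L * |b - b'|)
    (H : Set (Fin m → Fin n → ℝ)) (hH : H.Nonempty)
    (hHb : ∃ C : ℝ, ∀ Rh ∈ H, ∀ u : Fin m, ∀ i : Fin n, |Rh u i| ≤ C)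
    (P : Fin m × Fin n → ℝ) (hP0 : ∀ p, 0 ≤ P p)
    (hP1 : ∑ p : Fin m × Fin n, P p = 1)
    (P' : Fin m × Fin n → ℝ) (hP'0 : ∀ p, 0 ≤ P' p)
    (hP'1 : ∑ p : Fin m × Fin n, P' p = 1)
    (M : ℕ) (hM : 1 ≤ M)
    (δ : ℝ) (hδ : δ ∈ Set.Ioo (0 : ℝ) 1) :
    1 - δ ≤ prSample2 M P P' (fun S S' =>
      ∀ Rhat ∈ H,
        |PMD ℓ H Rhat P P' - PMD ℓ H Rhat (empDist S) (empDist S')| ≤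
          4 * L * (matRademacher M P H + matRademacher M P' H) +
            Δ * Real.sqrt (2 * Real.log (4 / δ) / M)) := by
  have : NeZero M := ⟨by omega⟩
  have : Nonempty H := hH.to_subtype
  have hP : P ∈ stdSimplex ℝ (Fin m × Fin n) := ⟨hP0, hP1⟩
  have hP' : P' ∈ stdSimplex ℝ (Fin m × Fin n) := ⟨hP'0, hP'1⟩
  set B := 4 * L * (matRademacher M P H + matRademacher M P' H) +
    Δ * Real.sqrt (2 * Real.log (4 / δ) / M) with hB
  have hrad (Q : Fin m × Fin n → ℝ) {π : H × H → H} (hπ : π.Surjective) :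
      PMDDeviation.radExp PMDDeviation.supCoord Q (PMDDeviation.entryVec hHb (2 * L) π) M =
        2 * L * M * matRademacher M Q H :=
    PMDDeviation.radExp_entryVec hHb (by positivity) hπ Q M
  have htail := PMDDeviation.iidProb₂_pairDev_add_le_of_lt_one (b := M * B)
    PMDDeviation.isSublinear_supCoord hP hP' (PMDDeviation.supCoord_lossVec_le hℓ)
    (PMDDeviation.supCoord_neg_lossVec_le hℓ) (by rwa [add_zero])
    (PMDDeviation.signContraction_lossVec hℓ hHb hL.le hLip1 hLip2) rfl hδ (by
      rw [hrad P Prod.fst_surjective, hrad P Prod.snd_surjective, hrad P' Prod.fst_surjective,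
        hrad P' Prod.snd_surjective, hB]
      ring)
  rw [PMDDeviation.prSample2_eq_iidProb₂]
  exact (sub_le_sub_left htail 1).trans <|
    PMDDeviation.one_sub_add_le_iidProb₂ hP hP' fun S S' hpos hneg Rhat hRhat =>
      PMDDeviation.abs_PMD_sub_le_of_supCoord_le hℓ (not_lt.1 hpos) (not_lt.1 hneg) hRhat
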